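/- arXiv:1806.02214 — 3 statements merged into one kernel-verified Lean document; each statement's English description precedes it below -/
import Mathlib

section
/- Let T > 0, let K be a Volterra kernel on [0,T] satisfying Condition (A) with exponent α ∈ [0, 1/4), and let R(s,t) := ∫_0^{min(s,t)} K(t,r) K(s,r) dr. If ψ₁, ψ₂: [0,T]² → ℝ are both strongly λ-Hölder bi-continuous with λ > α, or both λ-Hölder bi-continuous with λ > 2α, then the iterated 2D Young–Stieltjes sums Σ_{i,j,k,l} ψ₁(q_i, s_j) ψ₂(r_k, t_l) R(q_i,q_{i+1}; r_k,r_{k+1}) R(s_j,s_{j+1}; t_l,t_{l+1}), taken over pairs of grid partitions π₁ = {(q_i, s_j)} and π₂ = {(r_k, t_l)} of [0,T]², converge as the meshes of π₁ and π₂ tend to 0, and the limit equals ∫_{[0,T]²} (K*⊗K*)ψ₁(r₁,r₂) · (K*⊗K*)ψ₂(r₁,r₂) dr₁ dr₂. -/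
open MeasureTheory Set

noncomputable section

namespace YS

variable {E : Type*} [NormedAddCommGroup E] [NormedSpace ℝ E]

/-- A Volterra kernel: a measurable `K : ℝ² → ℝ` with `K t s = 0` whenever `s ≥ t`. -/
def IsVolterraKernel (K : ℝ → ℝ → ℝ) : Prop :=
  Measurable (Function.uncurry K) ∧ ∀ t s : ℝ, t ≤ s → K t s = 0

/-- Condition (A) with exponent `α` and constant `C`; here `K' t s` denotes the partial
derivative `∂K(t,s)/∂t`, whose existence is part of the condition. -/
def CondA (T α C : ℝ) (K K' : ℝ → ℝ → ℝ) : Prop :=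
  (∀ s t : ℝ, 0 < s → s < t → t ≤ T → |K t s| ≤ C * s ^ (-α) * (t - s) ^ (-α)) ∧
  ∀ s t : ℝ, 0 < s → s < t → t ≤ T →
    HasDerivAt (fun r => K r s) (K' t s) t ∧ |K' t s| ≤ C * (t - s) ^ (-(α + 1))

/-- The operator `𝒦*`:  `(𝒦*φ)(s) = φ(s)K(T,s) + ∫_s^T [φ(r) − φ(s)] ∂K(r,s)/∂r dr`. -/
def Kstar (T : ℝ) (K K' : ℝ → ℝ → ℝ) (φ : ℝ → E) (s : ℝ) : E :=
  K T s • φ s + ∫ r in s..T, K' r s • (φ r - φ s)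

/-- The operator `A^K`. -/
def AK (T : ℝ) (K' : ℝ → ℝ → ℝ) (φ : ℝ → E) (s : ℝ) : E :=
  ∫ r in s..T, K' r s • (φ r - φ s)

/-- Rectangular increment `f(u₁,u₂;v₁,v₂)`. -/
def rectInc (ψ : ℝ → ℝ → E) (u₁ u₂ v₁ v₂ : ℝ) : E :=
  ψ u₁ v₁ + ψ u₂ v₂ - ψ u₁ v₂ - ψ u₂ v₁

/-- The operator `B^K`. -/
def BK (T : ℝ) (K' : ℝ → ℝ → ℝ) (ψ : ℝ → ℝ → E) (u v : ℝ) : E :=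
  ∫ r₂ in v..T, ∫ r₁ in u..T, (K' r₁ u * K' r₂ v) • rectInc ψ u r₁ v r₂

/-- The operator `𝒦* ⊗ 𝒦*`. -/
def KstarT (T : ℝ) (K K' : ℝ → ℝ → ℝ) (ψ : ℝ → ℝ → E) (u v : ℝ) : E :=
  (K T u * K T v) • ψ u v + K T v • AK T K' (fun x => ψ x v) u +
    K T u • AK T K' (fun y => ψ u y) v + BK T K' ψ u v

/-- A partition `0 = s₀ < s₁ < ⋯ < s_n = T` of `[0,T]`. -/
structure Partition (T : ℝ) where
  n : ℕ
  pts : ℕ → ℝ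
  n_pos : 0 < n
  first : pts 0 = 0
  last : pts n = T
  lt : ∀ i < n, pts i < pts (i + 1)

/-- Mesh of a partition: the largest increment. -/
def Partition.mesh {T : ℝ} (P : Partition T) : ℝ :=
  (Finset.range P.n).sup' (Finset.nonempty_range_iff.mpr P.n_pos.ne')
    fun i => P.pts (i + 1) - P.pts i

/-- One-dimensional step approximation `φ^π`. -/
def step1 {T : ℝ} (P : Partition T) (φ : ℝ → E) (s : ℝ) : E :=
  ∑ i ∈ Finset.range P.n,
    (Set.Ico (P.pts i) (P.pts (i + 1))).indicator (fun _ => φ (P.pts i)) s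

/-- Two-dimensional step approximation `ψ^π` for the grid partition `P × Q`. -/
def step2 {T : ℝ} (P Q : Partition T) (ψ : ℝ → ℝ → E) (u v : ℝ) : E :=
  ∑ i ∈ Finset.range P.n, ∑ j ∈ Finset.range Q.n,
    ((Set.Ico (P.pts i) (P.pts (i + 1))) ×ˢ (Set.Ico (Q.pts j) (Q.pts (j + 1)))).indicator
      (fun _ => ψ (P.pts i) (Q.pts j)) (u, v)

/-- `λ`-Hölder continuity on `[0,T]` with constant `C`. -/
def IsHolderWith (T lam C : ℝ) (φ : ℝ → E) : Prop :=
  ∀ t₁ ∈ Icc (0:ℝ) T, ∀ t₂ ∈ Icc (0:ℝ) T, ‖φ t₁ - φ t₂‖ ≤ C * |t₁ - t₂| ^ lam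

/-- `λ`-Hölder continuity on `[0,T]`. -/
def IsHolder (T lam : ℝ) (φ : ℝ → E) : Prop := ∃ C : ℝ, IsHolderWith T lam C φ

/-- `λ`-Hölder bi-continuity with constant `C`. -/
def IsHolderBiWith (T lam C : ℝ) (ψ : ℝ → ℝ → E) : Prop :=
  (∀ u₁ ∈ Icc (0:ℝ) T, ∀ u₂ ∈ Icc (0:ℝ) T, ∀ v ∈ Icc (0:ℝ) T,
      ‖ψ u₂ v - ψ u₁ v‖ ≤ C * |u₂ - u₁| ^ lam) ∧
  ∀ u ∈ Icc (0:ℝ) T, ∀ v₁ ∈ Icc (0:ℝ) T, ∀ v₂ ∈ Icc (0:ℝ) T,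
      ‖ψ u v₂ - ψ u v₁‖ ≤ C * |v₂ - v₁| ^ lam

/-- `λ`-Hölder bi-continuity. -/
def IsHolderBi (T lam : ℝ) (ψ : ℝ → ℝ → E) : Prop := ∃ C : ℝ, IsHolderBiWith T lam C ψ

/-- Strong `λ`-Hölder bi-continuity with constant `C`. -/
def IsStrongHolderBiWith (T lam C : ℝ) (ψ : ℝ → ℝ → E) : Prop :=
  IsHolderBiWith T lam C ψ ∧
  ∀ u₁ ∈ Icc (0:ℝ) T, ∀ u₂ ∈ Icc (0:ℝ) T, ∀ v₁ ∈ Icc (0:ℝ) T, ∀ v₂ ∈ Icc (0:ℝ) T,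
    ‖rectInc ψ u₁ u₂ v₁ v₂‖ ≤ C * |u₂ - u₁| ^ lam * |v₂ - v₁| ^ lam

/-- Strong `λ`-Hölder bi-continuity. -/
def IsStrongHolderBi (T lam : ℝ) (ψ : ℝ → ℝ → E) : Prop :=
  ∃ C : ℝ, IsStrongHolderBiWith T lam C ψ

/-- The covariance function `R(s,t) = ∫_0^{s∧t} K(t,r)K(s,r) dr` of the Volterra process. -/
def covR (K : ℝ → ℝ → ℝ) (s t : ℝ) : ℝ := ∫ r in (0:ℝ)..(min s t), K t r * K s r

/-- The 2D Riemann–Stieltjes sum of `f` against `g` over the grid partition `P × Q`. -/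
def RSsum {T : ℝ} (P Q : Partition T) (f g : ℝ → ℝ → ℝ) : ℝ :=
  ∑ i ∈ Finset.range P.n, ∑ j ∈ Finset.range Q.n,
    f (P.pts i) (Q.pts j) *
      rectInc g (P.pts i) (P.pts (i + 1)) (Q.pts j) (Q.pts (j + 1))

/-!
Since `R(s,t) = ∫ K(s,r) K(t,r) dr`, the quadruple sum is the inner product in `L²([0,T]²)` of the
functions `(u,v) ↦ ∑ᵢⱼ ψ(sᵢ,tⱼ) (K(sᵢ₊₁,u) − K(sᵢ,u)) (K(tⱼ₊₁,v) − K(tⱼ,v))` for `ψ = ψ₁` and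
`ψ = ψ₂`. These functions are `𝒦*⊗𝒦*` applied to the step approximations of `ψ`, and it suffices to
show that they converge to `𝒦*⊗𝒦*ψ` in `L²`.

In one variable, if `φ` is `(α+2κ)`-Hölder, then `κ` of the regularity is spent on a factor
`mesh^κ` in the error `𝒦*φ - 𝒦*φ^π`, while the rest makes `∂K/∂r` integrable against the increments
of `φ`. The interval `[sᵢ, sᵢ₊₁)` containing `u` contributes the singularity
`u^(-α) (sᵢ₊₁ - u)^(-α)`, whose square integrability, uniformly in `π` after rescaling, is where
`4α < 1` enters. A strongly Hölder `ψ` is a Hölder map into a space of Hölder functions and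
`𝒦*⊗𝒦*` is `𝒦*` in one variable after `𝒦*` in the other, so this estimate applies to each variable
in turn. By interpolation, a `λ`-Hölder bi-continuous function is strongly `λ/2`-Hölder
bi-continuous.
-/

open Filter
open scoped Topology ENNReal

section RealPowers

variable {a b p u : ℝ}

lemma rpow_le_rpow_mul_rpow_sub {x y m r s : ℝ} (hx : 0 ≤ x) (hxy : x ≤ y) (hxm : x ≤ m)
    (hs : 0 ≤ s) (hsr : s ≤ r) : x ^ r ≤ m ^ s * y ^ (r - s) := by
  calc x ^ r = x ^ s * x ^ (r - s) := by
        rw [← Real.rpow_add_of_nonneg hx hs (sub_nonneg.2 hsr), add_sub_cancel]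
    _ ≤ m ^ s * y ^ (r - s) := mul_le_mul (Real.rpow_le_rpow hx hxm hs)
        (Real.rpow_le_rpow hx hxy (sub_nonneg.2 hsr)) (Real.rpow_nonneg hx _)
        (Real.rpow_nonneg (hx.trans hxm) _)

lemma intervalIntegrable_sub_rpow (hp : -1 < p) :
    IntervalIntegrable (fun r => (r - u) ^ p) volume a b := by
  simpa using
    (intervalIntegral.intervalIntegrable_rpow' (a := a - u) (b := b - u) hp).comp_sub_right u

lemma intervalIntegrable_const_sub_rpow (hp : -1 < p) :
    IntervalIntegrable (fun r => (u - r) ^ p) volume a b := by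
  simpa using
    (intervalIntegral.intervalIntegrable_rpow' (a := u - a) (b := u - b) hp).comp_sub_left u

lemma integral_sub_rpow (hp : -1 < p) :
    ∫ r in a..b, (r - a) ^ p = (b - a) ^ (p + 1) / (p + 1) := by
  rw [intervalIntegral.integral_comp_sub_right (fun r => r ^ p), integral_rpow (Or.inl hp),
    sub_self, Real.zero_rpow (by linarith), sub_zero]

lemma integral_const_sub_rpow (hp : -1 < p) :
    ∫ r in a..b, (b - r) ^ p = (b - a) ^ (p + 1) / (p + 1) := by
  rw [intervalIntegral.integral_comp_sub_left (fun r => r ^ p), integral_rpow (Or.inl hp),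
    sub_self, Real.zero_rpow (by linarith), sub_zero]

end RealPowers

section Partitions

variable {T : ℝ}

lemma Partition.pts_mono (P : Partition T) {i j : ℕ} (hij : i ≤ j) (hj : j ≤ P.n) :
    P.pts i ≤ P.pts j := by
  induction j, hij using Nat.le_induction with
  | base => exact le_rfl
  | succ k _ ih => exact (ih (by omega)).trans (P.lt k (by omega)).le

lemma Partition.pts_mem_Icc (P : Partition T) {i : ℕ} (hi : i ≤ P.n) : P.pts i ∈ Icc 0 T :=
  ⟨P.first.symm.trans_le (P.pts_mono i.zero_le hi), (P.pts_mono hi le_rfl).trans_eq P.last⟩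

lemma Partition.sub_le_mesh (P : Partition T) {i : ℕ} (hi : i < P.n) :
    P.pts (i + 1) - P.pts i ≤ P.mesh :=
  Finset.le_sup' (fun i => P.pts (i + 1) - P.pts i) (Finset.mem_range.mpr hi)

lemma Partition.mesh_pos (P : Partition T) : 0 < P.mesh :=
  (sub_pos.mpr (P.lt 0 P.n_pos)).trans_le (P.sub_le_mesh P.n_pos)

lemma Partition.exists_mem_Ico (P : Partition T) {u : ℝ} (hu : u ∈ Ico 0 T) :
    ∃ k < P.n, u ∈ Ico (P.pts k) (P.pts (k + 1)) := by
  classical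
  have hex : ∃ k, u < P.pts k := ⟨P.n, P.last.symm ▸ hu.2⟩
  obtain ⟨k, hk⟩ : ∃ k, Nat.find hex = k + 1 := by
    refine Nat.exists_eq_succ_of_ne_zero fun h => ?_
    have := Nat.find_spec hex
    rw [h, P.first] at this
    exact this.not_ge hu.1
  have hlt := Nat.find_spec hex
  rw [hk] at hlt
  have hle := not_lt.1 (Nat.find_min hex (m := k) (by omega))
  have hfind : Nat.find hex ≤ P.n := Nat.find_min' hex (P.last.symm ▸ hu.2)
  exact ⟨k, by omega, hle, hlt⟩

lemma Partition.sum_indicator_eq (P : Partition T) {k : ℕ} (hk : k < P.n) {u : ℝ}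
    (hu : u ∈ Ico (P.pts k) (P.pts (k + 1))) (f : ℕ → ℝ → ℝ) :
    ∑ i ∈ Finset.range P.n, (Ico (P.pts i) (P.pts (i + 1))).indicator (f i) u = f k u := by
  rw [Finset.sum_eq_single_of_mem k (Finset.mem_range.2 hk), indicator_of_mem hu]
  intro i hi hik
  refine indicator_of_notMem (fun hui => ?_) _
  rcases hik.lt_or_gt with h | h
  · exact ((P.pts_mono h hk.le).trans hu.1).not_gt hui.2
  · exact ((P.pts_mono h (Finset.mem_range.1 hi).le).trans hui.1).not_gt hu.2

lemma Partition.sum_integral_max (P : Partition T) {F : Type*} [NormedAddCommGroup F]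
    [NormedSpace ℝ F] {f : ℝ → F} {u : ℝ} (hu : u ∈ Icc 0 T)
    (hf : IntervalIntegrable f volume u T) :
    ∑ i ∈ Finset.range P.n, ∫ r in (max u (P.pts i))..(max u (P.pts (i + 1))), f r =
      ∫ r in u..T, f r := by
  have hmem {i : ℕ} (hi : i ≤ P.n) : max u (P.pts i) ∈ Icc u T :=
    ⟨le_max_left _ _, max_le hu.2 (P.pts_mem_Icc hi).2⟩
  rw [intervalIntegral.sum_integral_adjacent_intervals fun k hk => hf.mono_set ?_,
    P.first, P.last, max_eq_left hu.1, max_eq_right hu.2]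
  rw [uIcc_of_le hu.2]
  exact uIcc_subset_Icc (hmem hk.le) (hmem hk)

/-- The Riemann–Stieltjes sum `∑ φ(sᵢ) (g(sᵢ₊₁) − g(sᵢ))` with left tags. For `g = K(·, u)` it is
the value at `u` of `𝒦*` applied to the step function `step1 P φ`. -/
def Partition.stieltjesSum (P : Partition T) (φ : ℝ → E) (g : ℝ → ℝ) : E :=
  ∑ i ∈ Finset.range P.n, (g (P.pts (i + 1)) - g (P.pts i)) • φ (P.pts i)

lemma Partition.stieltjesSum_sub (P : Partition T) (φ χ : ℝ → E) (g : ℝ → ℝ) :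
    P.stieltjesSum (φ - χ) g = P.stieltjesSum φ g - P.stieltjesSum χ g := by
  simp only [stieltjesSum, Pi.sub_apply, smul_sub, Finset.sum_sub_distrib]

/-- The mesh filter on partitions of `[0,T]`: limits along it are limits as the mesh tends to
`0`. -/
def meshFilter (T : ℝ) : Filter (Partition T) := comap Partition.mesh (𝓝 0)

lemma hasBasis_meshFilter : (meshFilter T).HasBasis (0 < ·) fun δ => {P | P.mesh < δ} := by
  refine ((Metric.nhds_basis_ball (x := (0 : ℝ))).comap Partition.mesh).congr (by simp) ?_
  intro δ _
  ext P
  simp [abs_of_pos P.mesh_pos]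

instance : (meshFilter T).IsCountablyGenerated := by
  unfold meshFilter
  infer_instance

/-- The partition of `[0,T]` into `n + 1` intervals of equal length. -/
def Partition.uniform (hT : 0 < T) (n : ℕ) : Partition T where
  n := n + 1
  pts i := i * (T / (n + 1))
  n_pos := n.succ_pos
  first := by simp
  last := by push_cast; field_simp
  lt i _ := by push_cast; gcongr; linarith

lemma Partition.mesh_uniform (hT : 0 < T) (n : ℕ) :
    (Partition.uniform hT n).mesh = T / (n + 1) := by
  have h (i : ℕ) : (uniform hT n).pts (i + 1) - (uniform hT n).pts i = T / (n + 1) := by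
    simp only [uniform]; push_cast; ring
  simp only [mesh, h, Finset.sup'_const]

lemma neBot_meshFilter (hT : 0 < T) : (meshFilter T).NeBot := by
  refine hasBasis_meshFilter.neBot_iff.2 fun {δ} hδ => ?_
  obtain ⟨n, hn⟩ := exists_nat_gt (T / δ)
  refine ⟨Partition.uniform hT n, ?_⟩
  rw [mem_ofPred_eq, Partition.mesh_uniform, div_lt_comm₀ (by positivity) hδ]
  linarith

lemma tendsto_mesh_rpow {κ : ℝ} (hκ : 0 < κ) :
    Tendsto (fun P : Partition T => P.mesh ^ κ) (meshFilter T) (𝓝 0) := by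
  have h : Tendsto Partition.mesh (meshFilter T) (𝓝 0) := tendsto_comap
  simpa [Real.zero_rpow hκ.ne'] using h.rpow_const (Or.inr hκ.le)

end Partitions

section Kernel

variable {T α C lam κ M : ℝ} {K K' : ℝ → ℝ → ℝ} {φ χ : ℝ → E} {a b c u : ℝ}
  {F : Type*} [NormedAddCommGroup F] {f : ℝ → F}

lemma IsHolderWith.const_nonneg (hT : 0 < T) (hf : IsHolderWith T lam M f) : 0 ≤ M :=
  nonneg_of_mul_nonneg_left
    ((norm_nonneg _).trans (hf T (right_mem_Icc.2 hT.le) 0 (left_mem_Icc.2 hT.le)))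
    (Real.rpow_pos_of_pos (by simpa using hT.ne') _)

lemma IsHolderWith.continuousOn (hlam : 0 < lam) (hf : IsHolderWith T lam M f) :
    ContinuousOn f (Icc 0 T) := by
  intro x hx
  have h : Tendsto (fun y => M * |y - x| ^ lam) (𝓝[Icc 0 T] x) (𝓝 0) := by
    have hcont : Continuous fun y => M * |y - x| ^ lam :=
      continuous_const.mul ((by fun_prop : Continuous fun y => |y - x|).rpow_const
        fun _ => Or.inr hlam.le)
    simpa [Real.zero_rpow hlam.ne'] using (hcont.tendsto x).mono_left nhdsWithin_le_nhds
  refine tendsto_iff_norm_sub_tendsto_zero.2 (squeeze_zero' ?_ ?_ h)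
  · exact Eventually.of_forall fun _ => norm_nonneg _
  · exact eventually_nhdsWithin_of_forall fun y hy => hf y hy x hx

lemma CondA.const_nonneg (hT : 0 < T) (hA : CondA T α C K K') : 0 ≤ C :=
  nonneg_of_mul_nonneg_left
    ((abs_nonneg _).trans (hA.2 (T / 2) T (by linarith) (by linarith) le_rfl).2)
    (Real.rpow_pos_of_pos (by linarith) _)

lemma CondA.aestronglyMeasurable_deriv (hA : CondA T α C K K') (hu : 0 < u) (ha : u ≤ a)
    (hb : b ≤ T) : AEStronglyMeasurable (fun r => K' r u) (volume.restrict (Ioc a b)) := by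
  refine (measurable_deriv fun t => K t u).aestronglyMeasurable.congr ?_
  filter_upwards [ae_restrict_mem measurableSet_Ioc] with r hr
  exact (hA.2 u r hu (ha.trans_lt hr.1) (hr.2.trans hb)).1.deriv

lemma CondA.intervalIntegrable_deriv (hA : CondA T α C K K') (hα : 0 ≤ α) (hu : 0 < u)
    (ha : u < a) (hab : a ≤ b) (hb : b ≤ T) :
    IntervalIntegrable (fun r => K' r u) volume a b := by
  have hC := hA.const_nonneg (hu.trans_le (ha.le.trans (hab.trans hb)))
  refine (intervalIntegrable_const (c := C * (a - u) ^ (-(α + 1)))).mono_fun' ?_ ?_ <;>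
    rw [uIoc_of_le hab]
  · exact hA.aestronglyMeasurable_deriv hu ha.le hb
  · filter_upwards [ae_restrict_mem measurableSet_Ioc] with r hr
    refine (hA.2 u r hu (ha.trans hr.1) (hr.2.trans hb)).2.trans ?_
    exact mul_le_mul_of_nonneg_left (Real.rpow_le_rpow_of_nonpos (sub_pos.2 ha)
      (sub_le_sub_right hr.1.le u) (by linarith)) hC

lemma CondA.integral_deriv (hA : CondA T α C K K') (hα : 0 ≤ α) (hu : 0 < u) (ha : u < a)
    (hab : a ≤ b) (hb : b ≤ T) : ∫ r in a..b, K' r u = K b u - K a u := by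
  refine intervalIntegral.integral_eq_sub_of_hasDerivAt (f := (K · u)) (fun r hr => ?_)
    (hA.intervalIntegrable_deriv hα hu ha hab hb)
  rw [uIcc_of_le hab] at hr
  exact (hA.2 u r hu (ha.trans_le hr.1) (hr.2.trans hb)).1

lemma CondA.norm_deriv_smul_sub_le (hA : CondA T α C K K') (hφ : IsHolderWith T lam M φ)
    (hκ : 0 ≤ κ) (hκl : κ ≤ lam) (hu : 0 < u) (huc : u ≤ c) {r m : ℝ} (hcr : c < r)
    (hrT : r ≤ T) (hm : r - c ≤ m) :
    ‖K' r u • (φ r - φ c)‖ ≤ C * M * m ^ κ * (r - u) ^ (lam - κ - α - 1) := by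
  have hT : 0 < T := by linarith
  have hru : 0 < r - u := by linarith
  have hK' := (hA.2 u r hu (huc.trans_lt hcr) hrT).2
  have hφ' : ‖φ r - φ c‖ ≤ M * (m ^ κ * (r - u) ^ (lam - κ)) := by
    refine (hφ r ⟨by linarith, hrT⟩ c ⟨by linarith, by linarith⟩).trans ?_
    rw [abs_of_pos (sub_pos.2 hcr)]
    exact mul_le_mul_of_nonneg_left (rpow_le_rpow_mul_rpow_sub (sub_nonneg.2 hcr.le)
      (by linarith) hm hκ hκl) (hφ.const_nonneg hT)
  calc ‖K' r u • (φ r - φ c)‖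
      ≤ (C * (r - u) ^ (-(α + 1))) * (M * (m ^ κ * (r - u) ^ (lam - κ))) := by
        rw [norm_smul]
        exact mul_le_mul hK' hφ' (norm_nonneg _) ((abs_nonneg _).trans hK')
    _ = C * M * m ^ κ * ((r - u) ^ (-(α + 1)) * (r - u) ^ (lam - κ)) := by ring
    _ = C * M * m ^ κ * (r - u) ^ (lam - κ - α - 1) := by
        rw [← Real.rpow_add hru]; ring_nf

lemma CondA.norm_integral_deriv_smul_sub_le (hA : CondA T α C K K')
    (hφ : IsHolderWith T lam M φ) (hα : 0 ≤ α) (hκ : 0 ≤ κ) (hκl : α + κ < lam) (hu : 0 < u)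
    (huc : u ≤ c) (hcb : c ≤ b) (hbT : b ≤ T) {m : ℝ} (hm : b - c ≤ m) :
    ‖∫ r in c..b, K' r u • (φ r - φ c)‖ ≤
      C * M * m ^ κ * ∫ r in c..b, (r - u) ^ (lam - κ - α - 1) := by
  rw [← intervalIntegral.integral_const_mul]
  refine intervalIntegral.norm_integral_le_of_norm_le hcb (Eventually.of_forall fun r hr => ?_)
    ((intervalIntegrable_sub_rpow (by linarith)).const_mul _)
  exact hA.norm_deriv_smul_sub_le hφ hκ (by linarith) hu huc hr.1 (hr.2.trans hbT)
    ((sub_le_sub_right hr.2 c).trans hm)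

lemma CondA.intervalIntegrable_deriv_smul_sub (hA : CondA T α C K K') (hα : 0 ≤ α)
    (hlam : α < lam) (hφ : IsHolderWith T lam M φ) (hu : u ∈ Ioo 0 T) :
    IntervalIntegrable (fun r => K' r u • (φ r - φ u)) volume u T := by
  refine ((intervalIntegrable_sub_rpow (u := u) (p := lam - 0 - α - 1)
    (by linarith)).const_mul (C * M * (T - u) ^ (0 : ℝ))).mono_fun' ?_ ?_ <;>
    rw [uIoc_of_le hu.2.le]
  · have hcont : ContinuousOn φ (Ioc u T) := (hφ.continuousOn (by linarith)).mono
      fun r hr => ⟨hu.1.le.trans hr.1.le, hr.2⟩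
    exact (hA.aestronglyMeasurable_deriv hu.1 le_rfl le_rfl).smul
      ((hcont.aestronglyMeasurable measurableSet_Ioc).sub aestronglyMeasurable_const)
  · filter_upwards [ae_restrict_mem measurableSet_Ioc] with r hr
    exact hA.norm_deriv_smul_sub_le hφ le_rfl (by linarith) hu.1 le_rfl hr.1 hr.2
      (sub_le_sub_right hr.2 u)

lemma Kstar_sub (hA : CondA T α C K K') (hα : 0 ≤ α) (hlam : α < lam) {M' : ℝ}
    (hφ : IsHolderWith T lam M φ) (hχ : IsHolderWith T lam M' χ) (hu : u ∈ Ioo 0 T) :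
    Kstar T K K' (φ - χ) u = Kstar T K K' φ u - Kstar T K K' χ u := by
  simp only [Kstar, Pi.sub_apply, sub_sub_sub_comm (φ _) (χ _), smul_sub (K' _ u) (φ _ - φ u)]
  rw [intervalIntegral.integral_sub (hA.intervalIntegrable_deriv_smul_sub hα hlam hφ hu)
    (hA.intervalIntegrable_deriv_smul_sub hα hlam hχ hu), smul_sub]
  abel

/-- The ball of radius `M` in the space of `λ`-Hölder functions on `[0,T]`. -/
def IsBddHolderWith (T lam M : ℝ) (φ : ℝ → E) : Prop :=
  (∀ t ∈ Icc 0 T, ‖φ t‖ ≤ M) ∧ IsHolderWith T lam M φ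

/-- The `L²` majorant of `𝒦*φ` for `φ` in the unit ball of the `(α+p)`-Hölder functions. The mixed
singularity `u^(-α) (T-u)^(-α)` of the kernel is replaced by the sum of the two squares. -/
def kstarWeight (T α p C : ℝ) (u : ℝ) : ℝ :=
  C * (u ^ (-(2 * α)) + (T - u) ^ (-(2 * α)) + T ^ p / p)

lemma rpow_neg_mul_rpow_neg_le {x y : ℝ} (hx : 0 ≤ x) (hy : 0 ≤ y) (a : ℝ) :
    x ^ (-a) * y ^ (-a) ≤ x ^ (-(2 * a)) + y ^ (-(2 * a)) := by
  have hsq {z : ℝ} (hz : 0 ≤ z) : z ^ (-(2 * a)) = (z ^ (-a)) ^ 2 := by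
    rw [← Real.rpow_mul_natCast hz]; push_cast; ring_nf
  rw [hsq hx, hsq hy]
  nlinarith [two_mul_le_add_sq (x ^ (-a)) (y ^ (-a)), Real.rpow_nonneg hx (-a),
    Real.rpow_nonneg hy (-a)]

lemma norm_Kstar_le (hA : CondA T α C K K') (hα : 0 ≤ α) {p : ℝ} (hp : 0 < p)
    (hφ : IsBddHolderWith T (α + p) M φ) (hu : u ∈ Ioo 0 T) :
    ‖Kstar T K K' φ u‖ ≤ M * kstarWeight T α p C u := by
  have hT : 0 < T := hu.1.trans hu.2
  have hM := hφ.2.const_nonneg hT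
  have hC := hA.const_nonneg hT
  have hTu := sub_pos.2 hu.2
  have hpoint : ‖K T u • φ u‖ ≤ C * (u ^ (-(2 * α)) + (T - u) ^ (-(2 * α))) * M := by
    rw [norm_smul]
    refine mul_le_mul ((hA.1 u T hu.1 hu.2 le_rfl).trans ?_) (hφ.1 u ⟨hu.1.le, hu.2.le⟩)
      (norm_nonneg _) (mul_nonneg hC (add_nonneg (Real.rpow_nonneg hu.1.le _)
        (Real.rpow_nonneg hTu.le _)))
    rw [mul_assoc]
    exact mul_le_mul_of_nonneg_left (rpow_neg_mul_rpow_neg_le hu.1.le hTu.le α) hC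
  have hint : ‖∫ r in u..T, K' r u • (φ r - φ u)‖ ≤ C * M * (T ^ p / p) := by
    refine (hA.norm_integral_deriv_smul_sub_le hφ.2 hα le_rfl (by linarith) hu.1 le_rfl
      hu.2.le le_rfl le_rfl).trans ?_
    rw [integral_sub_rpow (by linarith), Real.rpow_zero, mul_one,
      show α + p - 0 - α - 1 + 1 = p by ring]
    have : (T - u) ^ p ≤ T ^ p := Real.rpow_le_rpow hTu.le (by linarith [hu.1]) hp.le
    gcongr
  calc ‖Kstar T K K' φ u‖
      ≤ C * (u ^ (-(2 * α)) + (T - u) ^ (-(2 * α))) * M + C * M * (T ^ p / p) :=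
        norm_add_le_of_le hpoint hint
    _ = M * kstarWeight T α p C u := by rw [kstarWeight]; ring

end Kernel

section StieltjesError

variable {T α C κ M u : ℝ} {K K' : ℝ → ℝ → ℝ} {φ : ℝ → E}

/-- The contribution of the `i`-th interval of the partition to the error `𝒦*φ - 𝒦*(step1 P φ)`. -/
def cellError (P : Partition T) (K K' : ℝ → ℝ → ℝ) (φ : ℝ → E) (u : ℝ) (i : ℕ) : E :=
  (∫ r in (max u (P.pts i))..(max u (P.pts (i + 1))), K' r u • (φ r - φ u)) +
    (K (P.pts (i + 1)) u - K (P.pts i) u) • (φ u - φ (P.pts i))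

lemma Kstar_sub_stieltjesSum (hK : IsVolterraKernel K) (hA : CondA T α C K K') (hα : 0 ≤ α)
    {lam : ℝ} (hlam : α < lam) (hφ : IsHolderWith T lam M φ) (hu : u ∈ Ioo 0 T)
    (P : Partition T) :
    Kstar T K K' φ u - P.stieltjesSum φ (K · u) =
      ∑ i ∈ Finset.range P.n, cellError P K K' φ u i := by
  have hK_T : K T u = ∑ i ∈ Finset.range P.n, (K (P.pts (i + 1)) u - K (P.pts i) u) := by
    rw [Finset.sum_range_sub fun i => K (P.pts i) u, P.last, P.first, hK.2 0 u hu.1.le, sub_zero]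
  simp only [cellError, Finset.sum_add_distrib, smul_sub (K _ u - K _ u),
    Finset.sum_sub_distrib, Partition.stieltjesSum]
  rw [P.sum_integral_max ⟨hu.1.le, hu.2.le⟩
    (hA.intervalIntegrable_deriv_smul_sub hα hlam hφ hu), ← Finset.sum_smul, ← hK_T, Kstar]
  abel

lemma cellError_of_le (hK : IsVolterraKernel K) (P : Partition T) {i : ℕ} (hi : i < P.n)
    (hu : P.pts (i + 1) ≤ u) : cellError P K K' φ u i = 0 := by
  have hu' := (P.lt i hi).le.trans hu
  rw [cellError, hK.2 _ _ hu, hK.2 _ _ hu', max_eq_left hu, max_eq_left hu']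
  simp

lemma norm_cellError_le_of_mem (hK : IsVolterraKernel K) (hA : CondA T α C K K') (hα : 0 ≤ α)
    (hκ : 0 < κ) (hφ : IsHolderWith T (α + 2 * κ) M φ) (hu : u ∈ Ioo 0 T) (P : Partition T)
    {i : ℕ} (hi : i < P.n) (hui : u ∈ Ico (P.pts i) (P.pts (i + 1))) :
    ‖cellError P K K' φ u i‖ ≤ C * M * P.mesh ^ κ *
      ((∫ r in u..P.pts (i + 1), (r - u) ^ (κ - 1)) + T ^ κ *
        (u ^ (-α) * ((P.pts (i + 1) - u) / (P.pts (i + 1) - P.pts i)) ^ (-α))) := by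
  have hT : 0 < T := hu.1.trans hu.2
  have hM := hφ.const_nonneg hT
  have hmesh := P.sub_le_mesh hi
  have hpi := P.pts_mem_Icc hi.le
  have hpi1 := P.pts_mem_Icc (i := i + 1) hi
  have hleft := sub_nonneg.2 hui.1
  have hright := sub_pos.2 hui.2
  have hint := hA.norm_integral_deriv_smul_sub_le hφ hα hκ.le (by linarith) hu.1 le_rfl
    hui.2.le hpi1.2 ((sub_le_sub_left hui.1 _).trans hmesh)
  rw [show α + 2 * κ - κ - α - 1 = κ - 1 by ring] at hint
  set Δ := P.pts (i + 1) - P.pts i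
  have hΔ_pos : 0 < Δ := sub_pos.2 (P.lt i hi)
  have hΔ_le : Δ ≤ T := (sub_le_self _ hpi.1).trans hpi1.2
  have hinc : ‖φ u - φ (P.pts i)‖ ≤ M * (P.mesh ^ κ * (Δ ^ α * T ^ κ)) := by
    refine (hφ u ⟨hu.1.le, hu.2.le⟩ _ hpi).trans (mul_le_mul_of_nonneg_left ?_ hM)
    rw [abs_of_nonneg hleft]
    refine (rpow_le_rpow_mul_rpow_sub hleft (sub_le_sub_right hui.2.le _ : _ ≤ Δ)
      (by linarith) hκ.le
      (by linarith)).trans (mul_le_mul_of_nonneg_left ?_ (Real.rpow_nonneg P.mesh_pos.le _))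
    rw [show α + 2 * κ - κ = α + κ by ring, Real.rpow_add hΔ_pos]
    have : Δ ^ κ ≤ T ^ κ := Real.rpow_le_rpow hΔ_pos.le hΔ_le hκ.le
    gcongr
  have hjump : ‖(K (P.pts (i + 1)) u - K (P.pts i) u) • (φ u - φ (P.pts i))‖ ≤
      C * u ^ (-α) * (P.pts (i + 1) - u) ^ (-α) * (M * (P.mesh ^ κ * (Δ ^ α * T ^ κ))) := by
    have hKb := hA.1 u _ hu.1 hui.2 hpi1.2
    rw [hK.2 _ _ hui.1, sub_zero, norm_smul]
    exact mul_le_mul hKb hinc (norm_nonneg _) ((abs_nonneg _).trans hKb)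
  rw [cellError, max_eq_left hui.1, max_eq_right hui.2.le]
  refine (norm_add_le_of_le hint hjump).trans_eq ?_
  rw [Real.div_rpow hright.le hΔ_pos.le, Real.rpow_neg hΔ_pos.le, div_inv_eq_mul]
  ring

variable [CompleteSpace E]

lemma cellError_of_lt (hA : CondA T α C K K') (hα : 0 ≤ α) {lam : ℝ} (hlam : α < lam)
    (hφ : IsHolderWith T lam M φ) (hu : u ∈ Ioo 0 T) (P : Partition T) {i : ℕ} (hi : i < P.n)
    (hui : u < P.pts i) :
    cellError P K K' φ u i = ∫ r in P.pts i..P.pts (i + 1), K' r u • (φ r - φ (P.pts i)) := by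
  have hlt := P.lt i hi
  have hT := (P.pts_mem_Icc (i := i + 1) hi).2
  have hsub : uIcc (P.pts i) (P.pts (i + 1)) ⊆ uIcc u T := by
    rw [uIcc_of_le hlt.le, uIcc_of_le hu.2.le]
    exact Icc_subset_Icc hui.le hT
  have hderiv := hA.intervalIntegrable_deriv hα hu.1 hui hlt.le hT
  rw [cellError, max_eq_right hui.le, max_eq_right (hui.trans hlt).le,
    ← hA.integral_deriv hα hu.1 hui hlt.le hT, ← intervalIntegral.integral_smul_const,
    ← intervalIntegral.integral_add
      ((hA.intervalIntegrable_deriv_smul_sub hα hlam hφ hu).mono_set hsub)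
      ⟨hderiv.1.smul_const _, hderiv.2.smul_const _⟩]
  simp only [← smul_add, sub_add_sub_cancel]

lemma norm_cellError_le (hK : IsVolterraKernel K) (hA : CondA T α C K K') (hα : 0 ≤ α)
    (hκ : 0 < κ) (hφ : IsHolderWith T (α + 2 * κ) M φ) (hu : u ∈ Ioo 0 T) (P : Partition T)
    {i : ℕ} (hi : i < P.n) :
    ‖cellError P K K' φ u i‖ ≤ C * M * P.mesh ^ κ *
      ((∫ r in max u (P.pts i)..max u (P.pts (i + 1)), (r - u) ^ (κ - 1)) + T ^ κ *
        (Ico (P.pts i) (P.pts (i + 1))).indicator (fun u => u ^ (-α) *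
          ((P.pts (i + 1) - u) / (P.pts (i + 1) - P.pts i)) ^ (-α)) u) := by
  have hlt := P.lt i hi
  rcases le_or_gt (P.pts (i + 1)) u with hright | hright
  · rw [cellError_of_le hK P hi hright, indicator_of_notMem (fun h => h.2.not_ge hright),
      max_eq_left hright, max_eq_left (hlt.le.trans hright)]
    simp
  rcases le_or_gt (P.pts i) u with hleft | hleft
  · rw [indicator_of_mem (mem_Ico.2 ⟨hleft, hright⟩), max_eq_left hleft, max_eq_right hright.le]
    exact norm_cellError_le_of_mem hK hA hα hκ hφ hu P hi ⟨hleft, hright⟩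
  · rw [cellError_of_lt hA hα (by linarith) hφ hu P hi hleft,
      indicator_of_notMem (fun h => h.1.not_gt hleft), max_eq_right hleft.le,
      max_eq_right hright.le, mul_zero, add_zero, ← show α + 2 * κ - κ - α - 1 = κ - 1 by ring]
    exact hA.norm_integral_deriv_smul_sub_le hφ hα hκ.le (by linarith) hu.1 hleft.le hlt.le
      (P.pts_mem_Icc hi).2 (P.sub_le_mesh hi)

/-- The function equal to `((sᵢ₊₁ - u) / (sᵢ₊₁ - sᵢ))^(-a)` on each interval `[sᵢ, sᵢ₊₁)`. It
carries the singularity of `K(sᵢ₊₁, ·)` at `sᵢ₊₁`, rescaled so that its `Lᵖ` norm over `[0,T]` does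
not depend on the partition. -/
def cellWeight (P : Partition T) (a : ℝ) (u : ℝ) : ℝ :=
  ∑ i ∈ Finset.range P.n, (Ico (P.pts i) (P.pts (i + 1))).indicator
    (fun u => ((P.pts (i + 1) - u) / (P.pts (i + 1) - P.pts i)) ^ (-a)) u

/-- The `L²` majorant of `𝒦*φ - 𝒦*(step1 P φ)` for `φ` in the unit ball of the `(α+2κ)`-Hölder
functions. -/
def errorWeight (α κ C : ℝ) (P : Partition T) (u : ℝ) : ℝ :=
  P.mesh ^ κ * (C * T ^ κ * (1 / κ + u ^ (-(2 * α)) + cellWeight P (2 * α) u))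

lemma norm_Kstar_sub_stieltjesSum_le (hK : IsVolterraKernel K) (hA : CondA T α C K K')
    (hα : 0 ≤ α) (hκ : 0 < κ) (hφ : IsHolderWith T (α + 2 * κ) M φ) (hu : u ∈ Ioo 0 T)
    (P : Partition T) :
    ‖Kstar T K K' φ u - P.stieltjesSum φ (K · u)‖ ≤ M * errorWeight α κ C P u := by
  have hT : 0 < T := hu.1.trans hu.2
  have hfactor : 0 ≤ C * M * P.mesh ^ κ := mul_nonneg
    (mul_nonneg (hA.const_nonneg hT) (hφ.const_nonneg hT)) (Real.rpow_nonneg P.mesh_pos.le _)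
  obtain ⟨k, hk, huk⟩ := P.exists_mem_Ico ⟨hu.1.le, hu.2⟩
  set q := (P.pts (k + 1) - u) / (P.pts (k + 1) - P.pts k)
  have hq : 0 ≤ q := div_nonneg (sub_nonneg.2 huk.2.le) (sub_nonneg.2 (P.lt k hk).le)
  have hpow : (T - u) ^ κ / κ ≤ T ^ κ / κ := div_le_div_of_nonneg_right
    (Real.rpow_le_rpow (sub_nonneg.2 hu.2.le) (by linarith [hu.1]) hκ.le) hκ.le
  rw [Kstar_sub_stieltjesSum hK hA hα (by linarith) hφ hu P]
  calc ‖∑ i ∈ Finset.range P.n, cellError P K K' φ u i‖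
      ≤ ∑ i ∈ Finset.range P.n, _ := norm_sum_le_of_le _ fun i hi =>
        norm_cellError_le hK hA hα hκ hφ hu P (Finset.mem_range.1 hi)
    _ = C * M * P.mesh ^ κ * ((T - u) ^ κ / κ + T ^ κ * (u ^ (-α) * q ^ (-α))) := by
        rw [← Finset.mul_sum, Finset.sum_add_distrib, ← Finset.mul_sum,
          P.sum_indicator_eq hk huk, P.sum_integral_max ⟨hu.1.le, hu.2.le⟩
          (intervalIntegrable_sub_rpow (by linarith)), integral_sub_rpow (by linarith),
          sub_add_cancel]
    _ ≤ C * M * P.mesh ^ κ *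
          (T ^ κ / κ + T ^ κ * (u ^ (-(2 * α)) + q ^ (-(2 * α)))) := by
        have := rpow_neg_mul_rpow_neg_le hu.1.le hq α
        gcongr
    _ = M * errorWeight α κ C P u := by
        rw [errorWeight, cellWeight, P.sum_indicator_eq hk huk]; ring

end StieltjesError

section SquareIntegrability

variable {X Y : Type*} [MeasurableSpace X] [MeasurableSpace Y] {μ : Measure X} {ν : Measure Y}
  {p : ℝ≥0∞} {ι : Type*} {l : Filter ι}

lemma eLpNorm_mul_prod [SFinite ν] {f : X → ℝ} {g : Y → ℝ} (hp : p ≠ 0) (hp' : p ≠ ∞)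
    (hf : AEStronglyMeasurable f μ) (hg : AEStronglyMeasurable g ν) :
    eLpNorm (fun z => f z.1 * g z.2) p (μ.prod ν) = eLpNorm f p μ * eLpNorm g p ν := by
  simp only [eLpNorm_eq_lintegral_rpow_enorm_toReal hp hp', enorm_mul,
    ENNReal.mul_rpow_of_nonneg _ _ ENNReal.toReal_nonneg]
  rw [lintegral_prod_mul (hf.enorm.pow_const _) (hg.enorm.pow_const _),
    ENNReal.mul_rpow_of_nonneg _ _ (by positivity)]

lemma memLp_mul_prod [SFinite ν] {f : X → ℝ} {g : Y → ℝ} (hp : p ≠ 0) (hp' : p ≠ ∞)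
    (hf : MemLp f p μ) (hg : MemLp g p ν) :
    MemLp (fun z => f z.1 * g z.2) p (μ.prod ν) := by
  refine ⟨hf.1.comp_fst.mul hg.1.comp_snd, ?_⟩
  rw [eLpNorm_mul_prod hp hp' hf.1 hg.1]
  exact ENNReal.mul_lt_top hf.2 hg.2

lemma aestronglyMeasurable_of_norm_sub_le_of_tendsto_eLpNorm [l.NeBot] [l.IsCountablyGenerated]
    {F : Type*} [NormedAddCommGroup F] {f : ι → X → F} {g : X → F} {h : ι → X → ℝ}
    (hp : p ≠ 0) (hf : ∀ i, AEStronglyMeasurable (f i) μ)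
    (hh : ∀ i, AEStronglyMeasurable (h i) μ)
    (hlim : Tendsto (fun i => eLpNorm (h i) p μ) l (𝓝 0))
    (hle : ∀ i, ∀ᵐ x ∂μ, ‖f i x - g x‖ ≤ h i x) : AEStronglyMeasurable g μ := by
  obtain ⟨ns, -, hns⟩ := (tendstoInMeasure_of_tendsto_eLpNorm (g := 0) hp hh
    aestronglyMeasurable_const (by simpa using hlim)).exists_seq_tendsto_ae'
  refine aestronglyMeasurable_of_tendsto_ae atTop (fun k => hf (ns k)) ?_
  filter_upwards [hns, ae_all_iff.2 fun k => hle (ns k)] with x hx hlex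
  exact tendsto_iff_norm_sub_tendsto_zero.2 (squeeze_zero (fun _ => norm_nonneg _) hlex hx)

lemma tendsto_integral_mul_of_tendsto_eLpNorm {f₁ f₂ : ι → X → ℝ} {g₁ g₂ : X → ℝ}
    (hf₁ : ∀ i, MemLp (f₁ i) 2 μ) (hf₂ : ∀ i, MemLp (f₂ i) 2 μ)
    (hg₁ : MemLp g₁ 2 μ) (hg₂ : MemLp g₂ 2 μ)
    (h₁ : Tendsto (fun i => eLpNorm (f₁ i - g₁) 2 μ) l (𝓝 0))
    (h₂ : Tendsto (fun i => eLpNorm (f₂ i - g₂) 2 μ) l (𝓝 0)) :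
    Tendsto (fun i => ∫ x, f₁ i x * f₂ i x ∂μ) l (𝓝 (∫ x, g₁ x * g₂ x ∂μ)) := by
  have hinner {u v : X → ℝ} (hu : MemLp u 2 μ) (hv : MemLp v 2 μ) :
      inner ℝ (hv.toLp v) (hu.toLp u) = ∫ x, u x * v x ∂μ := by
    rw [L2.inner_def]
    refine integral_congr_ae ?_
    filter_upwards [hu.coeFn_toLp, hv.coeFn_toLp] with x hux hvx
    simp [hux, hvx]
  simp only [← hinner (hf₁ _) (hf₂ _), ← hinner hg₁ hg₂]
  exact ((Lp.tendsto_Lp_iff_tendsto_eLpNorm'' f₂ hf₂ g₂ hg₂).2 h₂).inner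
    ((Lp.tendsto_Lp_iff_tendsto_eLpNorm'' f₁ hf₁ g₁ hg₁).2 h₁)

lemma memLp_two_rpow {f : ℝ → ℝ} {a b r : ℝ} (hab : a ≤ b) (hf : Measurable f)
    (hf0 : ∀ u ∈ Ioo a b, 0 ≤ f u)
    (hint : IntervalIntegrable (fun u => f u ^ (2 * r)) volume a b) :
    MemLp (fun u => f u ^ r) 2 (volume.restrict (Ioo a b)) := by
  rw [memLp_two_iff_integrable_sq (hf.pow_const r).aestronglyMeasurable]
  refine ((intervalIntegrable_iff_integrableOn_Ioo_of_le hab).1 hint).congr ?_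
  filter_upwards [ae_restrict_mem measurableSet_Ioo] with u hu
  rw [← Real.rpow_mul_natCast (hf0 u hu), mul_comm r, Nat.cast_ofNat]

end SquareIntegrability

section Weights

variable {T α κ C a : ℝ}

lemma memLp_two_rpow_neg (hT : 0 ≤ T) (hα : α < 1 / 4) :
    MemLp (fun u : ℝ => u ^ (-(2 * α))) 2 (volume.restrict (Ioo 0 T)) :=
  memLp_two_rpow hT measurable_id (fun _ hu => hu.1.le)
    (intervalIntegral.intervalIntegrable_rpow' (by linarith))

lemma memLp_two_const_sub_rpow_neg (hT : 0 ≤ T) (hα : α < 1 / 4) :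
    MemLp (fun u => (T - u) ^ (-(2 * α))) 2 (volume.restrict (Ioo 0 T)) :=
  memLp_two_rpow hT (measurable_const.sub measurable_id) (fun _ hu => sub_nonneg.2 hu.2.le)
    (intervalIntegrable_const_sub_rpow (by linarith))

lemma memLp_kstarWeight (hT : 0 ≤ T) (hα : α < 1 / 4) (p : ℝ) :
    MemLp (kstarWeight T α p C) 2 (volume.restrict (Ioo 0 T)) :=
  (((memLp_two_rpow_neg hT hα).add (memLp_two_const_sub_rpow_neg hT hα)).add
    (memLp_const (T ^ p / p))).const_mul C

lemma measurable_cellWeight (P : Partition T) (a : ℝ) : Measurable (cellWeight P a) :=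
  Finset.measurable_sum _ fun _ _ => Measurable.indicator (by fun_prop) measurableSet_Ico

lemma cellWeight_sq (P : Partition T) {u : ℝ} (hu : u ∈ Ico 0 T) :
    cellWeight P a u ^ 2 = cellWeight P (2 * a) u := by
  obtain ⟨k, hk, huk⟩ := P.exists_mem_Ico hu
  rw [cellWeight, cellWeight, P.sum_indicator_eq hk huk, P.sum_indicator_eq hk huk,
    ← Real.rpow_mul_natCast (div_nonneg (sub_nonneg.2 huk.2.le)
      (sub_nonneg.2 (P.lt k hk).le))]
  push_cast
  ring_nf

lemma eqOn_sub_rpow_div_sub_rpow {c d : ℝ} (hcd : c < d) (a : ℝ) :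
    EqOn (fun u => (d - u) ^ (-a) / (d - c) ^ (-a)) (fun u => ((d - u) / (d - c)) ^ (-a))
      (uIcc c d) := by
  intro u hu
  rw [uIcc_of_le hcd.le] at hu
  exact (Real.div_rpow (sub_nonneg.2 hu.2) (sub_nonneg.2 hcd.le) _).symm

lemma integrable_cell_rpow {c d : ℝ} (hcd : c < d) (ha : a < 1) :
    Integrable ((Ico c d).indicator fun u => ((d - u) / (d - c)) ^ (-a)) := by
  rw [integrable_indicator_iff measurableSet_Ico,
    ← intervalIntegrable_iff_integrableOn_Ico_of_le hcd.le]
  exact ((intervalIntegrable_const_sub_rpow (by linarith)).div_const _).congr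
    ((eqOn_sub_rpow_div_sub_rpow hcd a).mono uIoc_subset_uIcc)

lemma integral_cell_rpow {c d : ℝ} (hcd : c < d) (ha : a < 1) :
    ∫ u, (Ico c d).indicator (fun u => ((d - u) / (d - c)) ^ (-a)) u = (d - c) / (1 - a) := by
  have hdc := sub_pos.2 hcd
  rw [integral_indicator measurableSet_Ico, integral_Ico_eq_integral_Ioc,
    ← intervalIntegral.integral_of_le hcd.le,
    ← intervalIntegral.integral_congr (eqOn_sub_rpow_div_sub_rpow hcd a),
    intervalIntegral.integral_div, integral_const_sub_rpow (by linarith),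
    Real.rpow_add_one hdc.ne']
  have hne := (Real.rpow_pos_of_pos hdc (-a)).ne'
  field_simp
  ring_nf

lemma integrable_cellWeight (P : Partition T) (ha : a < 1) : Integrable (cellWeight P a) :=
  integrable_finsetSum _ fun i hi => integrable_cell_rpow (P.lt i (Finset.mem_range.1 hi)) ha

lemma integral_cellWeight (P : Partition T) (ha : a < 1) :
    ∫ u, cellWeight P a u = T / (1 - a) := by
  have hlt {i : ℕ} (hi : i ∈ Finset.range P.n) := P.lt i (Finset.mem_range.1 hi)
  simp only [cellWeight]
  rw [integral_finsetSum _ fun i hi => integrable_cell_rpow (hlt hi) ha,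
    Finset.sum_congr rfl fun i hi => integral_cell_rpow (hlt hi) ha, ← Finset.sum_div,
    Finset.sum_range_sub, P.last, P.first, sub_zero]

lemma memLp_cellWeight (P : Partition T) (ha : a < 1 / 2) :
    MemLp (cellWeight P a) 2 (volume.restrict (Ioo 0 T)) := by
  rw [memLp_two_iff_integrable_sq (measurable_cellWeight P a).aestronglyMeasurable]
  refine ((integrable_cellWeight P (a := 2 * a) (by linarith)).restrict (s := Ioo 0 T)).congr ?_
  filter_upwards [ae_restrict_mem measurableSet_Ioo] with u hu
  exact (cellWeight_sq P ⟨hu.1.le, hu.2⟩).symm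

lemma eLpNorm_cellWeight_le (P : Partition T) (ha : a < 1 / 2) :
    eLpNorm (cellWeight P a) 2 (volume.restrict (Ioo 0 T)) ≤
      ENNReal.ofReal √(T / (1 - 2 * a)) := by
  have h2a : 2 * a < 1 := by linarith
  rw [(memLp_cellWeight P ha).eLpNorm_eq_integral_rpow_norm two_ne_zero ENNReal.ofNat_ne_top,
    Real.sqrt_eq_rpow, ← integral_cellWeight P h2a]
  simp only [ENNReal.toReal_ofNat, Real.rpow_ofNat, Real.norm_eq_abs, sq_abs, one_div]
  refine ENNReal.ofReal_le_ofReal (Real.rpow_le_rpow (by positivity) ?_ (by positivity))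
  rw [setIntegral_congr_fun measurableSet_Ioo fun u hu => cellWeight_sq P ⟨hu.1.le, hu.2⟩]
  refine setIntegral_le_integral (integrable_cellWeight P h2a) (Eventually.of_forall fun u => ?_)
  refine Finset.sum_nonneg fun i _ => indicator_nonneg (fun v hv => ?_) u
  exact Real.rpow_nonneg (div_nonneg (sub_nonneg.2 hv.2.le) (by linarith [hv.1, hv.2])) _

lemma memLp_errorWeight (hT : 0 ≤ T) (hα : α < 1 / 4) (P : Partition T) :
    MemLp (errorWeight α κ C P) 2 (volume.restrict (Ioo 0 T)) :=
  ((((memLp_const (1 / κ)).add (memLp_two_rpow_neg hT hα)).add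
    (memLp_cellWeight P (by linarith))).const_mul _).const_mul _

lemma tendsto_eLpNorm_errorWeight (hT : 0 ≤ T) (hα : α < 1 / 4) (hκ : 0 < κ) (C : ℝ) :
    Tendsto (fun P => eLpNorm (errorWeight α κ C P) 2 (volume.restrict (Ioo 0 T)))
      (meshFilter T) (𝓝 0) := by
  set w : ℝ → ℝ := fun u => 1 / κ + u ^ (-(2 * α))
  have hw : MemLp w 2 (volume.restrict (Ioo 0 T)) :=
    (memLp_const (1 / κ)).add (memLp_two_rpow_neg hT hα)
  set B := ‖C * T ^ κ‖ₑ * (eLpNorm w 2 (volume.restrict (Ioo 0 T)) +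
    ENNReal.ofReal √(T / (1 - 2 * (2 * α))))
  have hB : B ≠ ∞ := ENNReal.mul_ne_top enorm_ne_top
    (ENNReal.add_ne_top.2 ⟨hw.eLpNorm_ne_top, ENNReal.ofReal_ne_top⟩)
  have hle (P : Partition T) :
      eLpNorm (errorWeight α κ C P) 2 (volume.restrict (Ioo 0 T)) ≤ ‖P.mesh ^ κ‖ₑ * B := by
    change eLpNorm (P.mesh ^ κ • (C * T ^ κ) • (w + cellWeight P (2 * α))) 2 _ ≤ _
    rw [eLpNorm_const_smul, eLpNorm_const_smul]
    refine mul_le_mul' le_rfl (mul_le_mul' le_rfl ?_)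
    exact (eLpNorm_add_le hw.1 (measurable_cellWeight P _).aestronglyMeasurable one_le_two).trans
      (add_le_add le_rfl (eLpNorm_cellWeight_le P (a := 2 * α) (by linarith)))
  have hlim : Tendsto (fun P : Partition T => ‖P.mesh ^ κ‖ₑ * B) (meshFilter T) (𝓝 0) := by
    simpa using ENNReal.Tendsto.mul_const (tendsto_mesh_rpow hκ).enorm (Or.inr hB)
  exact tendsto_of_tendsto_of_tendsto_of_le_of_le tendsto_const_nhds hlim
    (fun _ => zero_le) hle

end Weights

section TensorProduct

variable {T α C lam κ M : ℝ} {K K' : ℝ → ℝ → ℝ} {ψ : ℝ → ℝ → E} {u v : ℝ}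
  {F G : Type*} [NormedAddCommGroup F] [NormedAddCommGroup G] {f : ℝ → ℝ → F}

/-- A strongly `λ`-Hölder bi-continuous function regarded as a bounded `λ`-Hölder map of its second
variable, with values in the bounded `λ`-Hölder functions of the first one. -/
def IsBddStrongHolderBiWith (T lam M : ℝ) (ψ : ℝ → ℝ → E) : Prop :=
  (∀ y ∈ Icc 0 T, IsBddHolderWith T lam M (ψ · y)) ∧
    ∀ y ∈ Icc 0 T, ∀ y' ∈ Icc 0 T,
      IsBddHolderWith T lam (M * |y - y'| ^ lam) ((ψ · y) - (ψ · y'))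

lemma IsBddStrongHolderBiWith.isBddHolderWith_comp (hf : IsBddStrongHolderBiWith T lam M f)
    {Λ : (ℝ → F) → G} {c : ℝ}
    (hsub : ∀ φ χ : ℝ → F, ∀ N : ℝ, IsHolderWith T lam N φ → IsHolderWith T lam N χ →
      Λ (φ - χ) = Λ φ - Λ χ)
    (hbound : ∀ (φ : ℝ → F) (N : ℝ), IsBddHolderWith T lam N φ → ‖Λ φ‖ ≤ N * c) :
    IsBddHolderWith T lam (M * c) fun y => Λ (f · y) := by
  refine ⟨fun y hy => hbound _ _ (hf.1 y hy), fun y hy y' hy' => ?_⟩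
  rw [← hsub _ _ M (hf.1 y hy).2 (hf.1 y' hy').2, mul_right_comm]
  exact hbound _ _ (hf.2 y hy y' hy')

lemma IsBddStrongHolderBiWith.isBddHolderWith_right (hf : IsBddStrongHolderBiWith T lam M f)
    (hu : u ∈ Icc 0 T) : IsBddHolderWith T lam M (f u) := by
  simpa using hf.isBddHolderWith_comp (Λ := fun φ => φ u) (c := 1)
    (fun _ _ _ _ _ => rfl) (fun φ N hφ => by simpa using hφ.1 u hu)

lemma IsBddStrongHolderBiWith.isBddHolderWith_Kstar (hA : CondA T α C K K') (hα : 0 ≤ α) {p : ℝ}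
    (hp : 0 < p) (hψ : IsBddStrongHolderBiWith T (α + p) M ψ) (hu : u ∈ Ioo 0 T) :
    IsBddHolderWith T (α + p) (M * kstarWeight T α p C u) fun y => Kstar T K K' (ψ · y) u :=
  hψ.isBddHolderWith_comp (Λ := fun φ => Kstar T K K' φ u)
    (fun _ _ _ hφ hχ => Kstar_sub hA hα (by linarith) hφ hχ hu)
    fun _ _ hφ => norm_Kstar_le hA hα hp hφ hu

lemma IsBddStrongHolderBiWith.isBddHolderWith_Kstar_sub_stieltjesSum [CompleteSpace E]
    (hK : IsVolterraKernel K) (hA : CondA T α C K K') (hα : 0 ≤ α) (hκ : 0 < κ)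
    (hψ : IsBddStrongHolderBiWith T (α + 2 * κ) M ψ) (hu : u ∈ Ioo 0 T) (P : Partition T) :
    IsBddHolderWith T (α + 2 * κ) (M * errorWeight α κ C P u)
      fun y => Kstar T K K' (ψ · y) u - P.stieltjesSum (ψ · y) (K · u) := by
  refine hψ.isBddHolderWith_comp
    (Λ := fun φ => Kstar T K K' φ u - P.stieltjesSum φ (K · u)) (fun _ _ _ hφ hχ => ?_)
    fun _ _ hφ => norm_Kstar_sub_stieltjesSum_le hK hA hα hκ hφ.2 hu P
  rw [Kstar_sub hA hα (by linarith) hφ hχ hu, P.stieltjesSum_sub]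
  abel

lemma integral_deriv_mul_deriv_smul_rectInc (hA : CondA T α C K K') (hα : 0 ≤ α)
    (hlam : α < lam) {y : ℝ} (hy : IsHolderWith T lam M (ψ · y))
    (hv : IsHolderWith T lam M (ψ · v)) (hu : u ∈ Ioo 0 T) :
    ∫ r in u..T, (K' r u * K' y v) • rectInc ψ u r v y =
      K' y v • (Kstar T K K' (ψ · y) u - Kstar T K K' (ψ · v) u) -
        K T u • K' y v • (ψ u y - ψ u v) := by
  have hrect (r : ℝ) : (K' r u * K' y v) • rectInc ψ u r v y =
      K' y v • (K' r u • (ψ r y - ψ u y) - K' r u • (ψ r v - ψ u v)) := by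
    rw [rectInc]; module
  simp only [hrect, Kstar]
  rw [intervalIntegral.integral_smul, intervalIntegral.integral_sub
    (hA.intervalIntegrable_deriv_smul_sub hα hlam hy hu)
    (hA.intervalIntegrable_deriv_smul_sub hα hlam hv hu)]
  module

lemma KstarT_eq_Kstar_Kstar (hA : CondA T α C K K') (hα : 0 ≤ α) {p : ℝ} (hp : 0 < p)
    (hψ : IsBddStrongHolderBiWith T (α + p) M ψ) (hu : u ∈ Ioo 0 T) (hv : v ∈ Ioo 0 T) :
    KstarT T K K' ψ u v = Kstar T K K' (fun y => Kstar T K K' (ψ · y) u) v := by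
  have hlam : α < α + p := by linarith
  have hint := hA.intervalIntegrable_deriv_smul_sub hα hlam
    (hψ.isBddHolderWith_right (Ioo_subset_Icc_self hu)).2 hv
  have hint' := hA.intervalIntegrable_deriv_smul_sub hα hlam
    (hψ.isBddHolderWith_Kstar hA hα hp hu).2 hv
  have hBK : BK T K' ψ u v =
      (∫ y in v..T, K' y v • (Kstar T K K' (ψ · y) u - Kstar T K K' (ψ · v) u)) -
        K T u • ∫ y in v..T, K' y v • (ψ u y - ψ u v) := by
    rw [← intervalIntegral.integral_smul]
    refine Eq.trans ?_ (intervalIntegral.integral_sub hint' (hint.smul (K T u)))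
    refine intervalIntegral.integral_congr fun y hy => ?_
    rw [uIcc_of_le hv.2.le] at hy
    exact integral_deriv_mul_deriv_smul_rectInc hA hα hlam
      (hψ.1 y ⟨hv.1.le.trans hy.1, hy.2⟩).2 (hψ.1 v (Ioo_subset_Icc_self hv)).2 hu
  change _ = K T v • (K T u • ψ u v + AK T K' (ψ · v) u) +
    ∫ y in v..T, K' y v • (Kstar T K K' (ψ · y) u - Kstar T K K' (ψ · v) u)
  rw [KstarT, hBK, AK, AK]
  module

lemma norm_KstarT_le (hA : CondA T α C K K') (hα : 0 ≤ α) {p : ℝ} (hp : 0 < p)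
    (hψ : IsBddStrongHolderBiWith T (α + p) M ψ) (hu : u ∈ Ioo 0 T) (hv : v ∈ Ioo 0 T) :
    ‖KstarT T K K' ψ u v‖ ≤ M * (kstarWeight T α p C u * kstarWeight T α p C v) := by
  rw [KstarT_eq_Kstar_Kstar hA hα hp hψ hu hv, ← mul_assoc]
  exact norm_Kstar_le hA hα hp (hψ.isBddHolderWith_Kstar hA hα hp hu) hv

/-- The iterated Riemann–Stieltjes sum
`∑ᵢ ∑ⱼ ψ(sᵢ, tⱼ) (g(sᵢ₊₁) − g(sᵢ)) (h(tⱼ₊₁) − h(tⱼ))` over the grid `P × Q`. For `g = K(·, u)`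
and `h = K(·, v)` it is the value at `(u, v)` of `𝒦*⊗𝒦*` applied to `step2 P Q ψ`. -/
def stieltjesSum₂ (P Q : Partition T) (ψ : ℝ → ℝ → E) (g h : ℝ → ℝ) : E :=
  Q.stieltjesSum (fun y => P.stieltjesSum (ψ · y) g) h

/-- The `L²([0,T]²)` majorant of `𝒦*⊗𝒦*(ψ - step2 P Q ψ)` for `ψ` in the unit ball of the strongly
`(α+2κ)`-Hölder bi-continuous functions. -/
def errorWeight₂ (α κ C : ℝ) (P Q : Partition T) (z : ℝ × ℝ) : ℝ :=
  kstarWeight T α (2 * κ) C z.1 * errorWeight α κ C Q z.2 +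
    errorWeight α κ C P z.1 * kstarWeight T α (2 * κ) C z.2 +
    errorWeight α κ C P z.1 * errorWeight α κ C Q z.2

lemma norm_stieltjesSum₂_sub_KstarT_le [CompleteSpace E] (hK : IsVolterraKernel K)
    (hA : CondA T α C K K') (hα : 0 ≤ α) (hκ : 0 < κ)
    (hψ : IsBddStrongHolderBiWith T (α + 2 * κ) M ψ) (hu : u ∈ Ioo 0 T) (hv : v ∈ Ioo 0 T)
    (P Q : Partition T) :
    ‖stieltjesSum₂ P Q ψ (K · u) (K · v) - KstarT T K K' ψ u v‖ ≤
      M * errorWeight₂ α κ C P Q (u, v) := by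
  have h2κ : 0 < 2 * κ := by linarith
  set G : ℝ → E := fun y => Kstar T K K' (ψ · y) u
  set D : ℝ → E := fun y => G y - P.stieltjesSum (ψ · y) (K · u) with hD_def
  have hG : IsBddHolderWith T (α + 2 * κ) _ G := hψ.isBddHolderWith_Kstar hA hα h2κ hu
  have hD : IsBddHolderWith T (α + 2 * κ) _ D :=
    hψ.isBddHolderWith_Kstar_sub_stieltjesSum hK hA hα hκ hu P
  have hS : stieltjesSum₂ P Q ψ (K · u) (K · v) =
      Q.stieltjesSum G (K · v) - Q.stieltjesSum D (K · v) := by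
    rw [← Q.stieltjesSum_sub, sub_eq_of_eq_add' (a := G) (b := D)
      (c := fun y => P.stieltjesSum (ψ · y) (K · u)) (by ext y; simp [hD_def])]
    rfl
  have hdecomp : KstarT T K K' ψ u v - stieltjesSum₂ P Q ψ (K · u) (K · v) =
      (Kstar T K K' G v - Q.stieltjesSum G (K · v)) + Kstar T K K' D v -
        (Kstar T K K' D v - Q.stieltjesSum D (K · v)) := by
    rw [KstarT_eq_Kstar_Kstar hA hα h2κ hψ hu hv, hS]
    abel
  rw [norm_sub_rev, hdecomp]
  calc _ ≤ M * kstarWeight T α (2 * κ) C u * errorWeight α κ C Q v +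
          M * errorWeight α κ C P u * kstarWeight T α (2 * κ) C v +
          M * errorWeight α κ C P u * errorWeight α κ C Q v :=
        norm_sub_le_of_le (norm_add_le_of_le
          (norm_Kstar_sub_stieltjesSum_le hK hA hα hκ hG.2 hv Q)
          (norm_Kstar_le hA hα h2κ hD hv))
          (norm_Kstar_sub_stieltjesSum_le hK hA hα hκ hD.2 hv Q)
    _ = M * errorWeight₂ α κ C P Q (u, v) := by rw [errorWeight₂]; ring

end TensorProduct

section HolderEmbeddings

variable {T C lam : ℝ} {F : Type*} [NormedAddCommGroup F] {ψ : ℝ → ℝ → F}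

lemma IsHolderBiWith.const_nonneg (hT : 0 < T) (hψ : IsHolderBiWith T lam C ψ) : 0 ≤ C :=
  IsHolderWith.const_nonneg (f := fun u => ψ u 0) hT
    fun t₁ ht₁ t₂ ht₂ => hψ.1 t₂ ht₂ t₁ ht₁ 0 (left_mem_Icc.2 hT.le)

lemma abs_sub_rpow_le {x y : ℝ} (hlam : 0 ≤ lam) (hx : x ∈ Icc 0 T) (hy : y ∈ Icc 0 T) :
    |x - y| ^ lam ≤ T ^ lam :=
  Real.rpow_le_rpow (abs_nonneg _) (by simpa using abs_sub_le_of_le_of_le hx.1 hx.2 hy.1 hy.2) hlam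

lemma IsStrongHolderBi.exists_isBddStrongHolderBiWith (hT : 0 < T) (hlam : 0 ≤ lam)
    (hψ : IsStrongHolderBi T lam ψ) : ∃ M, IsBddStrongHolderBiWith T lam M ψ := by
  obtain ⟨C, hbi, hrect⟩ := hψ
  have hC := hbi.const_nonneg hT
  have h0 : (0 : ℝ) ∈ Icc 0 T := left_mem_Icc.2 hT.le
  have hTlam : 0 ≤ T ^ lam := Real.rpow_nonneg hT.le _
  set M := ‖ψ 0 0‖ + 2 * C * T ^ lam + C with hM
  have hCM : C ≤ M := by rw [hM]; linarith [norm_nonneg (ψ 0 0), mul_nonneg hC hTlam]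
  refine ⟨M, fun y hy => ⟨fun u hu => ?_, fun u hu u' hu' => ?_⟩,
    fun y hy y' hy' => ⟨fun u hu => ?_, fun u hu u' hu' => ?_⟩⟩
  · have hu0 := (hbi.1 0 h0 u hu y hy).trans
      (mul_le_mul_of_nonneg_left (abs_sub_rpow_le hlam hu h0) hC)
    have hy0 := (hbi.2 0 h0 0 h0 y hy).trans
      (mul_le_mul_of_nonneg_left (abs_sub_rpow_le hlam hy h0) hC)
    calc ‖ψ u y‖ = ‖(ψ u y - ψ 0 y) + (ψ 0 y - ψ 0 0) + ψ 0 0‖ := by congr 1; abel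
      _ ≤ C * T ^ lam + C * T ^ lam + ‖ψ 0 0‖ :=
        norm_add_le_of_le (norm_add_le_of_le hu0 hy0) le_rfl
      _ ≤ M := by rw [hM]; linarith
  · exact (hbi.1 u' hu' u hu y hy).trans (by gcongr)
  · exact (hbi.2 u hu y' hy' y hy).trans (by gcongr)
  · rw [mul_right_comm]
    calc _ = ‖rectInc ψ u' u y' y‖ := by rw [rectInc, Pi.sub_apply, Pi.sub_apply]; congr 1; abel
      _ ≤ C * |u - u'| ^ lam * |y - y'| ^ lam := hrect u' hu' u hu y' hy' y hy
      _ ≤ M * |u - u'| ^ lam * |y - y'| ^ lam := by gcongr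

lemma IsHolderBiWith.norm_rectInc_le (hψ : IsHolderBiWith T lam C ψ) {u₁ u₂ v₁ v₂ : ℝ}
    (hu₁ : u₁ ∈ Icc 0 T) (hu₂ : u₂ ∈ Icc 0 T) (hv₁ : v₁ ∈ Icc 0 T) (hv₂ : v₂ ∈ Icc 0 T) :
    ‖rectInc ψ u₁ u₂ v₁ v₂‖ ≤ 2 * C * min |u₂ - u₁| |v₂ - v₁| ^ lam := by
  rcases min_choice |u₂ - u₁| |v₂ - v₁| with h | h <;> rw [h]
  · calc ‖rectInc ψ u₁ u₂ v₁ v₂‖ = ‖(ψ u₂ v₂ - ψ u₁ v₂) - (ψ u₂ v₁ - ψ u₁ v₁)‖ := by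
          rw [rectInc]; congr 1; abel
      _ ≤ C * |u₂ - u₁| ^ lam + C * |u₂ - u₁| ^ lam :=
        norm_sub_le_of_le (hψ.1 u₁ hu₁ u₂ hu₂ v₂ hv₂) (hψ.1 u₁ hu₁ u₂ hu₂ v₁ hv₁)
      _ = 2 * C * |u₂ - u₁| ^ lam := by ring
  · calc ‖rectInc ψ u₁ u₂ v₁ v₂‖ = ‖(ψ u₂ v₂ - ψ u₂ v₁) - (ψ u₁ v₂ - ψ u₁ v₁)‖ := by
          rw [rectInc]; congr 1; abel
      _ ≤ C * |v₂ - v₁| ^ lam + C * |v₂ - v₁| ^ lam :=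
        norm_sub_le_of_le (hψ.2 u₂ hu₂ v₁ hv₁ v₂ hv₂) (hψ.2 u₁ hu₁ v₁ hv₁ v₂ hv₂)
      _ = 2 * C * |v₂ - v₁| ^ lam := by ring

lemma IsHolderBi.isStrongHolderBi_half (hT : 0 < T) (hlam : 0 ≤ lam) (hψ : IsHolderBi T lam ψ) :
    IsStrongHolderBi T (lam / 2) ψ := by
  obtain ⟨C, hbi⟩ := hψ
  have hC := hbi.const_nonneg hT
  have hTlam : 0 ≤ T ^ (lam / 2) := Real.rpow_nonneg hT.le _
  have hpow {x y m : ℝ} (hx : 0 ≤ x) (hxy : x ≤ y) (hxm : x ≤ m) :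
      x ^ lam ≤ m ^ (lam / 2) * y ^ (lam / 2) := by
    simpa only [sub_half] using rpow_le_rpow_mul_rpow_sub hx hxy hxm (by positivity)
        (half_le_self hlam)
  have hholder {x y : ℝ} (hx : x ∈ Icc 0 T) (hy : y ∈ Icc 0 T) :
      C * |x - y| ^ lam ≤ C * (T ^ (lam / 2) + 2) * |x - y| ^ (lam / 2) := by
    rw [mul_assoc]
    refine mul_le_mul_of_nonneg_left ?_ hC
    refine (hpow (abs_nonneg _) le_rfl
      (by simpa using abs_sub_le_of_le_of_le hx.1 hx.2 hy.1 hy.2)).trans ?_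
    gcongr
    linarith
  refine ⟨C * (T ^ (lam / 2) + 2), ⟨fun u₁ hu₁ u₂ hu₂ v hv => ?_, fun u hu v₁ hv₁ v₂ hv₂ => ?_⟩,
    fun u₁ hu₁ u₂ hu₂ v₁ hv₁ v₂ hv₂ => ?_⟩
  · exact (hbi.1 u₁ hu₁ u₂ hu₂ v hv).trans (hholder hu₂ hu₁)
  · exact (hbi.2 u hu v₁ hv₁ v₂ hv₂).trans (hholder hv₂ hv₁)
  · refine (hbi.norm_rectInc_le hu₁ hu₂ hv₁ hv₂).trans ?_
    rw [mul_assoc (C * _), mul_comm 2 C]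
    refine mul_le_mul ?_ (hpow (by positivity) (min_le_right _ _) (min_le_left _ _))
      (by positivity) (by positivity)
    gcongr
    linarith

end HolderEmbeddings

section Convergence

variable {T α κ C M : ℝ} {K K' : ℝ → ℝ → ℝ} {ψ : ℝ → ℝ → ℝ}

lemma memLp_kernel (hT : 0 < T) (hα : α < 1 / 4) (hK : IsVolterraKernel K)
    (hA : CondA T α C K K') {t : ℝ} (ht : t ∈ Icc 0 T) :
    MemLp (K t) 2 (volume.restrict (Ioo 0 T)) := by
  have hmeas : Measurable (K t) := hK.1.comp measurable_prodMk_left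
  have hind : (Iio t).indicator (K t) = K t :=
    indicator_eq_self.2 fun u hu => not_le.1 fun h => hu (hK.2 t u h)
  rw [← hind, memLp_indicator_iff_restrict measurableSet_Iio,
    Measure.restrict_restrict measurableSet_Iio, Iio_inter_Ioo, min_eq_left ht.2]
  refine (((memLp_two_rpow_neg ht.1 hα).add
    (memLp_two_const_sub_rpow_neg ht.1 hα)).const_mul C).mono' hmeas.aestronglyMeasurable ?_
  filter_upwards [ae_restrict_mem measurableSet_Ioo] with u hu
  refine (hA.1 u t hu.1 hu.2 ht.2).trans ?_
  rw [mul_assoc]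
  exact mul_le_mul_of_nonneg_left
    (rpow_neg_mul_rpow_neg_le hu.1.le (sub_nonneg.2 hu.2.le) α) (hA.const_nonneg hT)

/-- The increment `K(sᵢ₊₁, ·) − K(sᵢ, ·)` of the kernel over the `i`-th interval of a partition. -/
def kernelInc (K : ℝ → ℝ → ℝ) (P : Partition T) (i : ℕ) (u : ℝ) : ℝ :=
  K (P.pts (i + 1)) u - K (P.pts i) u

lemma memLp_kernelInc (hT : 0 < T) (hα : α < 1 / 4) (hK : IsVolterraKernel K)
    (hA : CondA T α C K K') (P : Partition T) {i : ℕ} (hi : i < P.n) :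
    MemLp (kernelInc K P i) 2 (volume.restrict (Ioo 0 T)) :=
  (memLp_kernel hT hα hK hA (P.pts_mem_Icc (i := i + 1) hi)).sub
    (memLp_kernel hT hα hK hA (P.pts_mem_Icc hi.le))

lemma stieltjesSum₂_kernel (P Q : Partition T) (ψ K : ℝ → ℝ → ℝ) (u v : ℝ) :
    stieltjesSum₂ P Q ψ (K · u) (K · v) = ∑ x ∈ Finset.range P.n ×ˢ Finset.range Q.n,
      ψ (P.pts x.1) (Q.pts x.2) * (kernelInc K P x.1 u * kernelInc K Q x.2 v) := by
  rw [Finset.sum_product_right]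
  simp only [stieltjesSum₂, Partition.stieltjesSum, kernelInc, smul_eq_mul, Finset.mul_sum]
  exact Finset.sum_congr rfl fun j _ => Finset.sum_congr rfl fun i _ => by ring

/-- Lebesgue measure on the open square `(0,T)²`, as a product measure. -/
abbrev squareMeasure (T : ℝ) : Measure (ℝ × ℝ) :=
  (volume.restrict (Ioo 0 T)).prod (volume.restrict (Ioo 0 T))

lemma ae_squareMeasure_mem : ∀ᵐ z ∂squareMeasure T, z.1 ∈ Ioo 0 T ∧ z.2 ∈ Ioo 0 T := by
  rw [squareMeasure, Measure.prod_restrict]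
  exact ae_restrict_mem (measurableSet_Ioo.prod measurableSet_Ioo)

lemma memLp_kernelInc_mul (hT : 0 < T) (hα : α < 1 / 4) (hK : IsVolterraKernel K)
    (hA : CondA T α C K K') (P Q : Partition T) {x : ℕ × ℕ}
    (hx : x ∈ Finset.range P.n ×ˢ Finset.range Q.n) (c : ℝ) :
    MemLp (fun z => c * (kernelInc K P x.1 z.1 * kernelInc K Q x.2 z.2)) 2 (squareMeasure T) := by
  rw [Finset.mem_product, Finset.mem_range, Finset.mem_range] at hx
  exact (memLp_mul_prod two_ne_zero ENNReal.ofNat_ne_top (memLp_kernelInc hT hα hK hA P hx.1)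
    (memLp_kernelInc hT hα hK hA Q hx.2)).const_mul c

lemma memLp_stieltjesSum₂ (hT : 0 < T) (hα : α < 1 / 4) (hK : IsVolterraKernel K)
    (hA : CondA T α C K K') (P Q : Partition T) (ψ : ℝ → ℝ → ℝ) :
    MemLp (fun z => stieltjesSum₂ P Q ψ (K · z.1) (K · z.2)) 2 (squareMeasure T) := by
  simp only [stieltjesSum₂_kernel]
  exact memLp_finsetSum _ fun x hx => memLp_kernelInc_mul hT hα hK hA P Q hx _

lemma aestronglyMeasurable_errorWeight₂ (hT : 0 ≤ T) (hα : α < 1 / 4) (P Q : Partition T) :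
    AEStronglyMeasurable (errorWeight₂ α κ C P Q) (squareMeasure T) := by
  have hw := (memLp_kstarWeight (C := C) hT hα (2 * κ)).1
  have he (P : Partition T) := (memLp_errorWeight (κ := κ) (C := C) hT hα P).1
  exact ((hw.comp_fst.mul (he Q).comp_snd).add ((he P).comp_fst.mul hw.comp_snd)).add
    ((he P).comp_fst.mul (he Q).comp_snd)

lemma tendsto_eLpNorm_errorWeight₂ (hT : 0 ≤ T) (hα : α < 1 / 4) (hκ : 0 < κ) (C : ℝ) :
    Tendsto (fun p : Partition T × Partition T =>
      eLpNorm (errorWeight₂ α κ C p.1 p.2) 2 (squareMeasure T))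
      (meshFilter T ×ˢ meshFilter T) (𝓝 0) := by
  have hw := memLp_kstarWeight (C := C) hT hα (2 * κ)
  have he (P : Partition T) := (memLp_errorWeight (κ := κ) (C := C) hT hα P).1
  set W := eLpNorm (kstarWeight T α (2 * κ) C) 2 (volume.restrict (Ioo 0 T))
  set e : Partition T → ℝ≥0∞ := fun P => eLpNorm (errorWeight α κ C P) 2 (volume.restrict (Ioo 0 T))
  have hW : W ≠ ∞ := hw.eLpNorm_ne_top
  have hle (p : Partition T × Partition T) :
      eLpNorm (errorWeight₂ α κ C p.1 p.2) 2 (squareMeasure T) ≤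
        W * e p.2 + e p.1 * W + e p.1 * e p.2 := by
    have hWe := hw.1.comp_fst.mul (he p.2).comp_snd
    have heW := (he p.1).comp_fst.mul hw.1.comp_snd
    have hee := (he p.1).comp_fst.mul (he p.2).comp_snd
    refine (eLpNorm_add_le (hWe.add heW) hee one_le_two).trans
      (add_le_add ((eLpNorm_add_le hWe heW one_le_two).trans_eq ?_) (le_of_eq ?_))
    · exact congrArg₂ _ (eLpNorm_mul_prod two_ne_zero ENNReal.ofNat_ne_top hw.1 (he p.2))
        (eLpNorm_mul_prod two_ne_zero ENNReal.ofNat_ne_top (he p.1) hw.1)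
    · exact eLpNorm_mul_prod two_ne_zero ENNReal.ofNat_ne_top (he p.1) (he p.2)
  have he_lim : Tendsto e (meshFilter T) (𝓝 0) := tendsto_eLpNorm_errorWeight hT hα hκ C
  have h₁ := he_lim.comp (tendsto_fst (g := meshFilter T))
  have h₂ := he_lim.comp (tendsto_snd (f := meshFilter T))
  refine tendsto_of_tendsto_of_tendsto_of_le_of_le tendsto_const_nhds ?_ (fun _ => zero_le) hle
  simpa using ((ENNReal.Tendsto.const_mul h₂ (Or.inr hW)).add
    (ENNReal.Tendsto.mul_const h₁ (Or.inr hW))).add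
      (ENNReal.Tendsto.mul h₁ (by simp) h₂ (by simp))

lemma ae_norm_stieltjesSum₂_sub_KstarT_le (hK : IsVolterraKernel K) (hA : CondA T α C K K')
    (hα : 0 ≤ α) (hκ : 0 < κ) (hψ : IsBddStrongHolderBiWith T (α + 2 * κ) M ψ)
    (P Q : Partition T) :
    ∀ᵐ z ∂squareMeasure T,
      ‖stieltjesSum₂ P Q ψ (K · z.1) (K · z.2) - KstarT T K K' ψ z.1 z.2‖ ≤
        (M • errorWeight₂ α κ C P Q) z := by
  filter_upwards [ae_squareMeasure_mem] with z hz
  exact norm_stieltjesSum₂_sub_KstarT_le hK hA hα hκ hψ hz.1 hz.2 P Q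

lemma tendsto_eLpNorm_smul_errorWeight₂ (hT : 0 ≤ T) (hα : α < 1 / 4) (hκ : 0 < κ) (C M : ℝ) :
    Tendsto (fun p : Partition T × Partition T =>
      eLpNorm (M • errorWeight₂ α κ C p.1 p.2) 2 (squareMeasure T))
      (meshFilter T ×ˢ meshFilter T) (𝓝 0) := by
  simp only [eLpNorm_const_smul]
  simpa using ENNReal.Tendsto.const_mul
    (tendsto_eLpNorm_errorWeight₂ hT hα hκ C) (Or.inr (enorm_ne_top (x := M)))

lemma aestronglyMeasurable_KstarT (hT : 0 < T) (hK : IsVolterraKernel K)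
    (hA : CondA T α C K K') (hα : 0 ≤ α) (hα' : α < 1 / 4) (hκ : 0 < κ)
    (hψ : IsBddStrongHolderBiWith T (α + 2 * κ) M ψ) :
    AEStronglyMeasurable (fun z => KstarT T K K' ψ z.1 z.2) (squareMeasure T) := by
  have := neBot_meshFilter hT
  exact aestronglyMeasurable_of_norm_sub_le_of_tendsto_eLpNorm
    (h := fun p : Partition T × Partition T => M • errorWeight₂ α κ C p.1 p.2) two_ne_zero
    (fun p => (memLp_stieltjesSum₂ hT hα' hK hA p.1 p.2 ψ).1)
    (fun p => (aestronglyMeasurable_errorWeight₂ hT.le hα' p.1 p.2).const_smul M)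
    (tendsto_eLpNorm_smul_errorWeight₂ hT.le hα' hκ C M)
    fun p => ae_norm_stieltjesSum₂_sub_KstarT_le hK hA hα hκ hψ p.1 p.2

lemma memLp_KstarT (hT : 0 < T) (hK : IsVolterraKernel K) (hA : CondA T α C K K') (hα : 0 ≤ α)
    (hα' : α < 1 / 4) (hκ : 0 < κ) (hψ : IsBddStrongHolderBiWith T (α + 2 * κ) M ψ) :
    MemLp (fun z => KstarT T K K' ψ z.1 z.2) 2 (squareMeasure T) := by
  have hw := memLp_kstarWeight (C := C) hT.le hα' (2 * κ)
  refine ((memLp_mul_prod two_ne_zero ENNReal.ofNat_ne_top hw hw).const_mul M).mono'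
    (aestronglyMeasurable_KstarT hT hK hA hα hα' hκ hψ) ?_
  filter_upwards [ae_squareMeasure_mem] with z hz
  exact norm_KstarT_le hA hα (by linarith) hψ hz.1 hz.2

lemma tendsto_eLpNorm_stieltjesSum₂_sub_KstarT (hT : 0 < T) (hK : IsVolterraKernel K)
    (hA : CondA T α C K K') (hα : 0 ≤ α) (hα' : α < 1 / 4) (hκ : 0 < κ)
    (hψ : IsBddStrongHolderBiWith T (α + 2 * κ) M ψ) :
    Tendsto (fun p : Partition T × Partition T =>
      eLpNorm ((fun z => stieltjesSum₂ p.1 p.2 ψ (K · z.1) (K · z.2)) -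
        fun z => KstarT T K K' ψ z.1 z.2) 2 (squareMeasure T))
      (meshFilter T ×ˢ meshFilter T) (𝓝 0) :=
  tendsto_of_tendsto_of_tendsto_of_le_of_le tendsto_const_nhds
    (tendsto_eLpNorm_smul_errorWeight₂ hT.le hα' hκ C M) (fun _ => zero_le) fun p =>
      eLpNorm_mono_ae_real (ae_norm_stieltjesSum₂_sub_KstarT_le hK hA hα hκ hψ p.1 p.2)

end Convergence

section Covariance

variable {T α C : ℝ} {K K' : ℝ → ℝ → ℝ} {ψ₁ ψ₂ : ℝ → ℝ → ℝ}

lemma integral_sum_mul_sum {X ι ι' : Type*} [MeasurableSpace X] {μ : Measure X} {s : Finset ι}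
    {t : Finset ι'} {f : ι → X → ℝ} {g : ι' → X → ℝ} (hf : ∀ i ∈ s, MemLp (f i) 2 μ)
    (hg : ∀ k ∈ t, MemLp (g k) 2 μ) :
    ∫ x, (∑ i ∈ s, f i x) * ∑ k ∈ t, g k x ∂μ = ∑ i ∈ s, ∑ k ∈ t, ∫ x, f i x * g k x ∂μ := by
  have hint {i k} (hi : i ∈ s) (hk : k ∈ t) : Integrable (fun x => f i x * g k x) μ :=
    (hf i hi).integrable_mul (hg k hk)
  simp only [Finset.sum_mul_sum]
  rw [integral_finsetSum _ fun i hi => integrable_finsetSum _ fun k hk => hint hi hk]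
  exact Finset.sum_congr rfl fun i hi => integral_finsetSum _ fun k hk => hint hi hk

lemma covR_eq_setIntegral (hK : IsVolterraKernel K) {s t : ℝ} (hs : s ∈ Icc 0 T)
    (ht : t ∈ Icc 0 T) : covR K s t = ∫ r in Ioo 0 T, K s r * K t r := by
  rw [covR, intervalIntegral.integral_of_le (le_min hs.1 ht.1), integral_Ioc_eq_integral_Ioo]
  simp only [mul_comm (K t _)]
  refine (setIntegral_eq_of_subset_of_forall_sdiff_eq_zero measurableSet_Ioo
    (Ioo_subset_Ioo_right (min_le_of_left_le hs.2)) fun r hr => ?_).symm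
  rcases min_le_iff.1 (not_lt.1 fun h => hr.2 ⟨hr.1.1, h⟩) with h | h <;> simp [hK.2 _ _ h]

lemma rectInc_covR (hT : 0 < T) (hα : α < 1 / 4) (hK : IsVolterraKernel K)
    (hA : CondA T α C K K') (P Q : Partition T) {i k : ℕ} (hi : i < P.n) (hk : k < Q.n) :
    rectInc (covR K) (P.pts i) (P.pts (i + 1)) (Q.pts k) (Q.pts (k + 1)) =
      ∫ r in Ioo 0 T, kernelInc K P i r * kernelInc K Q k r := by
  have hs := P.pts_mem_Icc hi.le
  have hs' := P.pts_mem_Icc (i := i + 1) hi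
  have ht := Q.pts_mem_Icc hk.le
  have ht' := Q.pts_mem_Icc (i := k + 1) hk
  have hint {s t : ℝ} (hs : s ∈ Icc 0 T) (ht : t ∈ Icc 0 T) :
      Integrable (fun r => K s r * K t r) (volume.restrict (Ioo 0 T)) :=
    (memLp_kernel hT hα hK hA hs).integrable_mul (memLp_kernel hT hα hK hA ht)
  rw [rectInc, covR_eq_setIntegral hK hs ht, covR_eq_setIntegral hK hs' ht',
    covR_eq_setIntegral hK hs ht', covR_eq_setIntegral hK hs' ht,
    ← integral_add' (hint hs ht) (hint hs' ht'),
    ← integral_sub' ((hint hs ht).add (hint hs' ht')) (hint hs ht'),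
    ← integral_sub' (((hint hs ht).add (hint hs' ht')).sub (hint hs ht')) (hint hs' ht)]
  refine integral_congr_ae (Eventually.of_forall fun r => ?_)
  simp only [kernelInc, Pi.add_apply, Pi.sub_apply]
  ring

/-- The iterated 2D Young–Stieltjes sum over the grid partitions `P₁ × P₂` and `Q₁ × Q₂`. -/
def iteratedYoungSum (P₁ P₂ Q₁ Q₂ : Partition T) (R ψ₁ ψ₂ : ℝ → ℝ → ℝ) : ℝ :=
  ∑ i ∈ Finset.range P₁.n, ∑ j ∈ Finset.range P₂.n, ∑ k ∈ Finset.range Q₁.n,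
    ∑ l ∈ Finset.range Q₂.n,
    ψ₁ (P₁.pts i) (P₂.pts j) * ψ₂ (Q₁.pts k) (Q₂.pts l) *
      rectInc R (P₁.pts i) (P₁.pts (i + 1)) (Q₁.pts k) (Q₁.pts (k + 1)) *
      rectInc R (P₂.pts j) (P₂.pts (j + 1)) (Q₂.pts l) (Q₂.pts (l + 1))

lemma iteratedYoungSum_covR (hT : 0 < T) (hα : α < 1 / 4) (hK : IsVolterraKernel K)
    (hA : CondA T α C K K') (P₁ P₂ Q₁ Q₂ : Partition T) (ψ₁ ψ₂ : ℝ → ℝ → ℝ) :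
    iteratedYoungSum P₁ P₂ Q₁ Q₂ (covR K) ψ₁ ψ₂ =
      ∫ z, stieltjesSum₂ P₁ P₂ ψ₁ (K · z.1) (K · z.2) *
        stieltjesSum₂ Q₁ Q₂ ψ₂ (K · z.1) (K · z.2) ∂squareMeasure T := by
  simp only [stieltjesSum₂_kernel]
  rw [integral_sum_mul_sum (fun x hx => memLp_kernelInc_mul hT hα hK hA P₁ P₂ hx _)
    (fun y hy => memLp_kernelInc_mul hT hα hK hA Q₁ Q₂ hy _), Finset.sum_product]
  refine Finset.sum_congr rfl fun i hi => Finset.sum_congr rfl fun j hj => ?_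
  rw [Finset.sum_product]
  refine Finset.sum_congr rfl fun k hk => Finset.sum_congr rfl fun l hl => ?_
  rw [Finset.mem_range] at hi hj hk hl
  rw [rectInc_covR hT hα hK hA P₁ Q₁ hi hk, rectInc_covR hT hα hK hA P₂ Q₂ hj hl, mul_assoc,
    ← integral_prod_mul, ← integral_const_mul]
  exact integral_congr_ae (Eventually.of_forall fun z => by ring)

lemma integral_squareMeasure (hT : 0 ≤ T) {f : ℝ × ℝ → ℝ}
    (hf : Integrable f (squareMeasure T)) :
    ∫ z, f z ∂squareMeasure T = ∫ u in (0 : ℝ)..T, ∫ v in (0 : ℝ)..T, f (u, v) := by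
  simp only [intervalIntegral.integral_of_le hT, integral_Ioc_eq_integral_Ioo]
  exact integral_prod f hf

lemma tendsto_iteratedYoungSum_covR (hT : 0 < T) (hK : IsVolterraKernel K)
    (hA : CondA T α C K K') (hα : 0 ≤ α) (hα' : α < 1 / 4) {lam₁ lam₂ : ℝ} (hlam₁ : α < lam₁)
    (hlam₂ : α < lam₂) (hψ₁ : IsStrongHolderBi T lam₁ ψ₁) (hψ₂ : IsStrongHolderBi T lam₂ ψ₂) :
    Tendsto (fun p : (Partition T × Partition T) × Partition T × Partition T =>
      iteratedYoungSum p.1.1 p.1.2 p.2.1 p.2.2 (covR K) ψ₁ ψ₂)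
      ((meshFilter T ×ˢ meshFilter T) ×ˢ meshFilter T ×ˢ meshFilter T)
      (𝓝 (∫ u in (0 : ℝ)..T, ∫ v in (0 : ℝ)..T,
        KstarT T K K' ψ₁ u v * KstarT T K K' ψ₂ u v)) := by
  obtain ⟨κ₁, hκ₁, rfl⟩ : ∃ κ > 0, lam₁ = α + 2 * κ := ⟨(lam₁ - α) / 2, by linarith, by ring⟩
  obtain ⟨κ₂, hκ₂, rfl⟩ : ∃ κ > 0, lam₂ = α + 2 * κ := ⟨(lam₂ - α) / 2, by linarith, by ring⟩
  obtain ⟨M₁, hM₁⟩ := hψ₁.exists_isBddStrongHolderBiWith hT (by linarith)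
  obtain ⟨M₂, hM₂⟩ := hψ₂.exists_isBddStrongHolderBiWith hT (by linarith)
  have hL₁ := memLp_KstarT hT hK hA hα hα' hκ₁ hM₁
  have hL₂ := memLp_KstarT hT hK hA hα hα' hκ₂ hM₂
  rw [← integral_squareMeasure hT.le
    (f := fun z => KstarT T K K' ψ₁ z.1 z.2 * KstarT T K K' ψ₂ z.1 z.2) (hL₁.integrable_mul hL₂)]
  simp only [iteratedYoungSum_covR hT hα' hK hA]
  exact tendsto_integral_mul_of_tendsto_eLpNorm
    (fun p => memLp_stieltjesSum₂ hT hα' hK hA p.1.1 p.1.2 ψ₁)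
    (fun p => memLp_stieltjesSum₂ hT hα' hK hA p.2.1 p.2.2 ψ₂) hL₁ hL₂
    ((tendsto_eLpNorm_stieltjesSum₂_sub_KstarT hT hK hA hα hα' hκ₁ hM₁).comp tendsto_fst)
    ((tendsto_eLpNorm_stieltjesSum₂_sub_KstarT hT hK hA hα hα' hκ₂ hM₂).comp tendsto_snd)

end Covariance

/-- Proposition 4.4: convergence of the iterated 2D Young–Stieltjes
sums to `∫_{[0,T]²} (𝒦*⊗𝒦*)ψ₁ · (𝒦*⊗𝒦*)ψ₂`. -/
theorem iterated_youngIntegral_covR (T α lam : ℝ) (hT : 0 < T) (hα : 0 ≤ α) (hα' : α < 1 / 4)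
    (K K' : ℝ → ℝ → ℝ) (hK : IsVolterraKernel K) (hA : ∃ C : ℝ, CondA T α C K K')
    (ψ₁ ψ₂ : ℝ → ℝ → ℝ) (hlam : 0 < lam) (hlam' : lam ≤ 1)
    (hψ : (IsStrongHolderBi T lam ψ₁ ∧ IsStrongHolderBi T lam ψ₂ ∧ α < lam) ∨
          (IsHolderBi T lam ψ₁ ∧ IsHolderBi T lam ψ₂ ∧ 2 * α < lam)) :
    ∀ ε > 0, ∃ δ > 0, ∀ P₁ P₂ Q₁ Q₂ : Partition T,
      max (max P₁.mesh P₂.mesh) (max Q₁.mesh Q₂.mesh) < δ →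
      |(∑ i ∈ Finset.range P₁.n, ∑ j ∈ Finset.range P₂.n, ∑ k ∈ Finset.range Q₁.n,
          ∑ l ∈ Finset.range Q₂.n,
          ψ₁ (P₁.pts i) (P₂.pts j) * ψ₂ (Q₁.pts k) (Q₂.pts l) *
            rectInc (covR K) (P₁.pts i) (P₁.pts (i + 1)) (Q₁.pts k) (Q₁.pts (k + 1)) *
            rectInc (covR K) (P₂.pts j) (P₂.pts (j + 1)) (Q₂.pts l) (Q₂.pts (l + 1))) -
        ∫ r₁ in (0:ℝ)..T, ∫ r₂ in (0:ℝ)..T,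
          KstarT T K K' ψ₁ r₁ r₂ * KstarT T K K' ψ₂ r₁ r₂| < ε := by
  suffices h : ∃ lam' > α, IsStrongHolderBi T lam' ψ₁ ∧ IsStrongHolderBi T lam' ψ₂ by
    obtain ⟨C, hA⟩ := hA
    obtain ⟨lam', hlam', h₁, h₂⟩ := h
    intro ε hε
    obtain ⟨δ, hδ, hsub⟩ := (hasBasis_meshFilter.prod_self.prod_self.tendsto_iff
      Metric.nhds_basis_ball).1
      (tendsto_iteratedYoungSum_covR hT hK hA hα hα' hlam' hlam' h₁ h₂) ε hε
    refine ⟨δ, hδ, fun P₁ P₂ Q₁ Q₂ hmesh => hsub ((P₁, P₂), Q₁, Q₂) ?_⟩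
    simpa only [max_lt_iff, mem_prod, mem_ofPred_eq] using hmesh
  rcases hψ with ⟨h₁, h₂, hαlam⟩ | ⟨h₁, h₂, hαlam⟩
  · exact ⟨lam, hαlam, h₁, h₂⟩
  · exact ⟨lam / 2, by linarith, h₁.isStrongHolderBi_half hT hlam.le,
      h₂.isStrongHolderBi_half hT hlam.le⟩

end YS
end
end

section
/- Let E be a Banach space, T > 0, and let K be a Volterra kernel on [0,T] satisfying Condition (A) with exponent α ∈ [0, 1/4). Let φ: [0,T] → E be λ-Hölder continuous with λ > α. For a partition π = {s_i} of [0,T] let φ^π(s) := Σ_i φ(s_i) 1_{[s_i, s_{i+1})}(s). Then ∫_0^T ‖K*(φ^π − φ)(s)‖_E² ds → 0 as the mesh ‖π‖ := max_i (s_{i+1} − s_i) tends to 0; i.e., for every ε > 0 there is δ > 0 such that every partition with mesh < δ satisfies ∫_0^T ‖K*(φ^π − φ)(s)‖_E² ds < ε. -/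
open MeasureTheory Set

noncomputable section

namespace YS

variable {E : Type*} [NormedAddCommGroup E] [NormedSpace ℝ E]

/-!
Write `f = φ^π - φ`, let `m` be the mesh and `D` a Hölder constant of `φ`, and fix `β` with
`max α 0 < β < min λ (1/2)`.

For `s < r`, `‖f r - f s‖` is at most `2 D m ^ λ`, and also at most `2 D (2 ρ(s) (r - s)) ^ λ`,
where `ρ(s) = (sᵢ₊₁ - sᵢ) / (sᵢ₊₁ - s)` for `s ∈ [sᵢ, sᵢ₊₁)`: if `r` lies in a later cell then
`r - s ≥ sᵢ₊₁ - s`, so `ρ(s) (r - s)` dominates the length of the cell of `s`. Interpolating, `f` is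
`β`-Hölder to the right of `s` with constant of order `m ^ (λ - β) ρ(s) ^ β`, and since `β > α`

`‖𝒦*f(s)‖ ≤ const · m ^ (λ - β) (s ^ (-α) (T - s) ^ (-α) + ρ(s) ^ β)`.

As `2 α < 1`, the first summand is square integrable. The cruder bound `(sᵢ₊₁ - s) ^ (-β)` for the
second one would lose uniformity over partitions with many small cells, whereas
`∫₀ᵀ ρ ^ (2 β) = T / (1 - 2 β)` for every partition. Hence `∫₀ᵀ ‖𝒦*f‖² = O(m ^ (2 (λ - β)))`.
-/

section RpowIntegrals

theorem intervalIntegrable_sub_left_rpow (a b : ℝ) {p : ℝ} (hp : -1 < p) :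
    IntervalIntegrable (fun x => (b - x) ^ p) volume a b := by
  simpa only [sub_sub_cancel, sub_zero] using
    (intervalIntegral.intervalIntegrable_rpow' (a := b - a) (b := 0) hp).comp_sub_left b

theorem intervalIntegrable_sub_right_rpow (a b : ℝ) {p : ℝ} (hp : -1 < p) :
    IntervalIntegrable (fun x => (x - a) ^ p) volume a b := by
  simpa only [zero_add, sub_add_cancel] using
    (intervalIntegral.intervalIntegrable_rpow' (a := 0) (b := b - a) hp).comp_sub_right a

theorem integral_sub_left_rpow (a b : ℝ) {p : ℝ} (hp : -1 < p) :
    ∫ x in a..b, (b - x) ^ p = (b - a) ^ (p + 1) / (p + 1) := by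
  rw [intervalIntegral.integral_comp_sub_left (fun x => x ^ p), integral_rpow (Or.inl hp),
    sub_self, Real.zero_rpow (by linarith), sub_zero]

theorem integral_sub_right_rpow (a b : ℝ) {p : ℝ} (hp : -1 < p) :
    ∫ x in a..b, (x - a) ^ p = (b - a) ^ (p + 1) / (p + 1) := by
  rw [intervalIntegral.integral_comp_sub_right (fun x => x ^ p), integral_rpow (Or.inl hp),
    sub_self, Real.zero_rpow (by linarith), sub_zero]

theorem intervalIntegrable_rpow_mul_sub_rpow_half {T p : ℝ} (q : ℝ) (hT : 0 < T) (hp : -1 < p) :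
    IntervalIntegrable (fun x => x ^ p * (T - x) ^ q) volume 0 (T / 2) := by
  refine (intervalIntegral.intervalIntegrable_rpow' hp).mul_continuousOn fun x hx => ?_
  rw [uIcc_of_le (by positivity)] at hx
  have hx' : T - x ≠ 0 := by linarith [hx.2]
  exact ((continuousAt_const.sub continuousAt_id).rpow_const (Or.inl hx')).continuousWithinAt

theorem intervalIntegrable_rpow_mul_sub_rpow {T p q : ℝ} (hT : 0 < T) (hp : -1 < p)
    (hq : -1 < q) : IntervalIntegrable (fun x => x ^ p * (T - x) ^ q) volume 0 T := by
  refine (intervalIntegrable_rpow_mul_sub_rpow_half q hT hp).trans ?_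
  have h := ((intervalIntegrable_rpow_mul_sub_rpow_half p hT hq).comp_sub_left T).symm
  simpa only [sub_sub_cancel, sub_zero, sub_half, mul_comm] using h

theorem div_sub_rpow_eq {a b p x : ℝ} (hab : a ≤ b) (hx : x ≤ b) :
    ((b - a) / (b - x)) ^ p = (b - a) ^ p * (b - x) ^ (-p) := by
  rw [Real.div_rpow (sub_nonneg.mpr hab) (sub_nonneg.mpr hx), Real.rpow_neg (sub_nonneg.mpr hx),
    div_eq_mul_inv]

theorem intervalIntegrable_div_sub_rpow {a b p : ℝ} (hab : a ≤ b) (hp : p < 1) :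
    IntervalIntegrable (fun x => ((b - a) / (b - x)) ^ p) volume a b := by
  refine ((intervalIntegrable_sub_left_rpow a b (neg_lt_neg hp)).const_mul ((b - a) ^ p)).congr_uIoo
    fun x hx => ?_
  rw [uIoo_of_le hab] at hx
  exact (div_sub_rpow_eq hab hx.2.le).symm

theorem integral_div_sub_rpow {a b p : ℝ} (hab : a < b) (hp : p < 1) :
    ∫ x in a..b, ((b - a) / (b - x)) ^ p = (b - a) / (1 - p) := by
  calc ∫ x in a..b, ((b - a) / (b - x)) ^ p
      = ∫ x in a..b, (b - a) ^ p * (b - x) ^ (-p) :=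
        intervalIntegral.integral_congr_Ioo_of_le hab.le
          fun x hx => div_sub_rpow_eq hab.le hx.2.le
    _ = (b - a) ^ p * ((b - a) ^ (-p + 1) / (-p + 1)) := by
        rw [intervalIntegral.integral_const_mul, integral_sub_left_rpow a b (neg_lt_neg hp)]
    _ = (b - a) / (1 - p) := by
        rw [← mul_div_assoc, ← Real.rpow_add (sub_pos.mpr hab), add_neg_cancel_left, Real.rpow_one,
          neg_add_eq_sub]

end RpowIntegrals

theorem norm_intervalIntegral_le_of_norm_le_Ioo {a b : ℝ} {f : ℝ → E} {g : ℝ → ℝ} (hab : a ≤ b)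
    (hfg : ∀ x ∈ Ioo a b, ‖f x‖ ≤ g x) (hg : IntervalIntegrable g volume a b) :
    ‖∫ x in a..b, f x‖ ≤ ∫ x in a..b, g x := by
  refine intervalIntegral.norm_integral_le_of_norm_le hab ?_ hg
  filter_upwards [Measure.ae_ne volume b] with x hxb hx
  exact hfg x ⟨hx.1, hx.2.lt_of_ne hxb⟩

namespace Partition

variable {T : ℝ} (P : Partition T)

theorem strictMonoOn_pts : StrictMonoOn P.pts (Iic P.n) :=
  strictMonoOn_of_lt_add_one ordConnected_Iic fun i _ _ hi => P.lt i hi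

theorem pts_mem_Icc_s6 {i : ℕ} (hi : i ≤ P.n) : P.pts i ∈ Icc 0 T := by
  constructor
  · simpa only [P.first] using P.strictMonoOn_pts.monotoneOn (Nat.zero_le P.n) hi (Nat.zero_le i)
  · simpa only [P.last] using P.strictMonoOn_pts.monotoneOn hi self_mem_Iic hi

theorem length_pos (P : Partition T) : 0 < T := by
  simpa only [P.first, P.last] using P.strictMonoOn_pts (Nat.zero_le P.n) self_mem_Iic P.n_pos

theorem sub_le_mesh_s6 {i : ℕ} (hi : i < P.n) : P.pts (i + 1) - P.pts i ≤ P.mesh :=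
  Finset.le_sup' (fun i => P.pts (i + 1) - P.pts i) (Finset.mem_range.mpr hi)

theorem mesh_pos_s6 : 0 < P.mesh :=
  (sub_pos.mpr (P.lt 0 P.n_pos)).trans_le (P.sub_le_mesh_s6 P.n_pos)

theorem mesh_le : P.mesh ≤ T :=
  Finset.sup'_le _ _ fun i hi => by
    have hi := Finset.mem_range.mp hi
    linarith [(P.pts_mem_Icc_s6 hi.le).1, (P.pts_mem_Icc_s6 (Nat.succ_le_of_lt hi)).2]

theorem exists_mem_cell {s : ℝ} (hs : s ∈ Ico 0 T) :
    ∃ i < P.n, s ∈ Ico (P.pts i) (P.pts (i + 1)) := by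
  have hn : s < P.pts P.n := by simpa only [P.last] using hs.2
  have hex : ∃ j, s < P.pts (j + 1) := ⟨P.n - 1, by rwa [Nat.sub_add_cancel P.n_pos]⟩
  classical
  refine ⟨Nat.find hex, ?_, ?_, Nat.find_spec hex⟩
  · have : Nat.find hex ≤ P.n - 1 := Nat.find_min' hex (by rwa [Nat.sub_add_cancel P.n_pos])
    have := P.n_pos
    omega
  · rcases h : Nat.find hex with _ | k
    · simpa only [P.first] using hs.1
    · exact not_lt.mp (Nat.find_min hex (m := k) (by omega))

theorem index_le_of_le {s r : ℝ} {i j : ℕ} (hi : i < P.n) (hj : j < P.n)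
    (hs : s ∈ Ico (P.pts i) (P.pts (i + 1))) (hr : r ∈ Ico (P.pts j) (P.pts (j + 1)))
    (hsr : s ≤ r) : i ≤ j :=
  Nat.lt_succ_iff.mp <| (P.strictMonoOn_pts.lt_iff_lt hi.le (Nat.succ_le_of_lt hj)).mp <|
    hs.1.trans_lt (hsr.trans_lt hr.2)

theorem index_unique {s : ℝ} {i j : ℕ} (hi : i < P.n) (hj : j < P.n)
    (hsi : s ∈ Ico (P.pts i) (P.pts (i + 1))) (hsj : s ∈ Ico (P.pts j) (P.pts (j + 1))) : i = j :=
  (P.index_le_of_le hi hj hsi hsj le_rfl).antisymm (P.index_le_of_le hj hi hsj hsi le_rfl)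

theorem sum_indicator_cell_apply {F : Type*} [AddCommMonoid F] (g : ℕ → ℝ → F) {s : ℝ} {i : ℕ}
    (hi : i < P.n) (hs : s ∈ Ico (P.pts i) (P.pts (i + 1))) :
    ∑ j ∈ Finset.range P.n, (Ico (P.pts j) (P.pts (j + 1))).indicator (g j) s = g i s := by
  rw [Finset.sum_eq_single_of_mem i (Finset.mem_range.mpr hi), indicator_of_mem hs]
  exact fun j hj hji => indicator_of_notMem
    (fun hsj => hji (P.index_unique (Finset.mem_range.mp hj) hi hsj hs)) _

/-- The stretch factor `(sᵢ₊₁ - sᵢ) / (sᵢ₊₁ - s)` for `s` in the cell `[sᵢ, sᵢ₊₁)`, and `0` outside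
`[0, T)`. It measures how singular `𝒦*(φ^π - φ)` is just before a node; being scale invariant, its
powers have an integral over `[0, T]` that does not depend on the partition. -/
def stretch (s : ℝ) : ℝ :=
  ∑ i ∈ Finset.range P.n, (Ico (P.pts i) (P.pts (i + 1))).indicator
    (fun s => (P.pts (i + 1) - P.pts i) / (P.pts (i + 1) - s)) s

theorem stretch_of_mem_cell {s : ℝ} {i : ℕ} (hi : i < P.n)
    (hs : s ∈ Ico (P.pts i) (P.pts (i + 1))) :
    P.stretch s = (P.pts (i + 1) - P.pts i) / (P.pts (i + 1) - s) :=
  P.sum_indicator_cell_apply _ hi hs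

theorem one_le_stretch {s : ℝ} (hs : s ∈ Ico 0 T) : 1 ≤ P.stretch s := by
  obtain ⟨i, hi, hsi⟩ := P.exists_mem_cell hs
  rw [P.stretch_of_mem_cell hi hsi, one_le_div (sub_pos.mpr hsi.2)]
  exact sub_le_sub_left hsi.1 _

theorem intervalIntegrable_stretch_rpow_cell {i : ℕ} (hi : i < P.n) {p : ℝ} (hp : p < 1) :
    IntervalIntegrable (fun s => P.stretch s ^ p) volume (P.pts i) (P.pts (i + 1)) := by
  refine (intervalIntegrable_div_sub_rpow (P.lt i hi).le hp).congr_uIoo fun s hs => ?_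
  rw [uIoo_of_le (P.lt i hi).le] at hs
  exact congrArg (· ^ p) (P.stretch_of_mem_cell hi (Ioo_subset_Ico_self hs)).symm

theorem integral_stretch_rpow_cell {i : ℕ} (hi : i < P.n) {p : ℝ} (hp : p < 1) :
    ∫ s in P.pts i..P.pts (i + 1), P.stretch s ^ p = (P.pts (i + 1) - P.pts i) / (1 - p) := by
  rw [← integral_div_sub_rpow (P.lt i hi) hp]
  exact intervalIntegral.integral_congr_Ioo_of_le (P.lt i hi).le fun s hs =>
    congrArg (· ^ p) (P.stretch_of_mem_cell hi (Ioo_subset_Ico_self hs))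

theorem intervalIntegrable_stretch_rpow {p : ℝ} (hp : p < 1) :
    IntervalIntegrable (fun s => P.stretch s ^ p) volume 0 T := by
  simpa only [P.first, P.last] using
    IntervalIntegrable.trans_iterate fun i hi => P.intervalIntegrable_stretch_rpow_cell hi hp

theorem integral_stretch_rpow {p : ℝ} (hp : p < 1) :
    ∫ s in 0..T, P.stretch s ^ p = T / (1 - p) := by
  have hsum := intervalIntegral.sum_integral_adjacent_intervals
    fun i hi => P.intervalIntegrable_stretch_rpow_cell hi hp
  rw [P.first, P.last] at hsum
  rw [← hsum, Finset.sum_congr rfl fun i hi =>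
    P.integral_stretch_rpow_cell (Finset.mem_range.mp hi) hp, ← Finset.sum_div,
    Finset.sum_range_sub, P.first, P.last, sub_zero]

end Partition

theorem le_mul_rpow_mul_rpow_of_le {x A a b p q : ℝ} (hA : 0 ≤ A) (ha : 0 ≤ a) (hb : 0 ≤ b)
    (hp : 0 ≤ p) (hq : 0 ≤ q) (hxa : x ≤ A * a ^ (p + q)) (hxb : x ≤ A * b ^ (p + q)) :
    x ≤ A * (a ^ p * b ^ q) := by
  rcases le_total a b with hab | hba
  · calc x ≤ A * (a ^ p * a ^ q) := by rwa [← Real.rpow_add_of_nonneg ha hp hq]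
      _ ≤ A * (a ^ p * b ^ q) := by gcongr
  · calc x ≤ A * (b ^ p * b ^ q) := by rwa [← Real.rpow_add_of_nonneg hb hp hq]
      _ ≤ A * (a ^ p * b ^ q) := by gcongr

theorem step1_of_mem_cell {F : Type*} [NormedAddCommGroup F] {T : ℝ} (P : Partition T)
    (φ : ℝ → F) {s : ℝ} {i : ℕ} (hi : i < P.n) (hs : s ∈ Ico (P.pts i) (P.pts (i + 1))) :
    step1 P φ s = φ (P.pts i) :=
  P.sum_indicator_cell_apply (fun i _ => φ (P.pts i)) hi hs

namespace IsHolderWith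

variable {F : Type*} [NormedAddCommGroup F] {T lam C : ℝ} {φ : ℝ → F}

theorem const_nonneg_s6 (hφ : IsHolderWith T lam C φ) (hT : 0 < T) : 0 ≤ C := by
  have h := (norm_nonneg _).trans (hφ T (right_mem_Icc.mpr hT.le) 0 (left_mem_Icc.mpr hT.le))
  rw [sub_zero, abs_of_pos hT] at h
  exact nonneg_of_mul_nonneg_left h (Real.rpow_pos_of_pos hT lam)

theorem norm_sub_le (hφ : IsHolderWith T lam C φ) (hC : 0 ≤ C) (hlam : 0 ≤ lam) {t₁ t₂ d : ℝ}
    (h₁ : t₁ ∈ Icc 0 T) (h₂ : t₂ ∈ Icc 0 T) (hd : |t₁ - t₂| ≤ d) :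
    ‖φ t₁ - φ t₂‖ ≤ C * d ^ lam :=
  (hφ t₁ h₁ t₂ h₂).trans (by gcongr)

variable (P : Partition T)

theorem norm_step1_sub_le (hφ : IsHolderWith T lam C φ) (hlam : 0 ≤ lam) {s : ℝ}
    (hs : s ∈ Ico 0 T) : ‖step1 P φ s - φ s‖ ≤ C * P.mesh ^ lam := by
  obtain ⟨i, hi, hsi⟩ := P.exists_mem_cell hs
  rw [step1_of_mem_cell P φ hi hsi]
  refine hφ.norm_sub_le (hφ.const_nonneg_s6 P.length_pos) hlam (P.pts_mem_Icc_s6 hi.le)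
    (Ico_subset_Icc_self hs) ?_
  rw [abs_sub_comm, abs_of_nonneg (sub_nonneg.mpr hsi.1)]
  linarith [P.sub_le_mesh_s6 hi, hsi.2]

theorem norm_step1_sub_le_mesh_rpow_mul {β : ℝ} (hφ : IsHolderWith T lam C φ) (hβ : 0 ≤ β)
    (hβlam : β ≤ lam) {s : ℝ} (hs : s ∈ Ico 0 T) :
    ‖step1 P φ s - φ s‖ ≤ C * (P.mesh ^ (lam - β) * T ^ β) := by
  have hC := hφ.const_nonneg_s6 P.length_pos
  have hm := P.mesh_pos_s6
  calc ‖step1 P φ s - φ s‖ ≤ C * P.mesh ^ lam := hφ.norm_step1_sub_le P (hβ.trans hβlam) hs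
    _ = C * (P.mesh ^ (lam - β) * P.mesh ^ β) := by rw [← Real.rpow_add hm, sub_add_cancel]
    _ ≤ C * (P.mesh ^ (lam - β) * T ^ β) := by
        gcongr
        exact P.mesh_le

theorem norm_step1_sub_sub_le_mesh (hφ : IsHolderWith T lam C φ) (hlam : 0 ≤ lam) {s r : ℝ}
    (hs : s ∈ Ico 0 T) (hr : r ∈ Ico 0 T) :
    ‖(step1 P φ r - φ r) - (step1 P φ s - φ s)‖ ≤ 2 * C * P.mesh ^ lam := by
  have := norm_sub_le_of_le (hφ.norm_step1_sub_le P hlam hr) (hφ.norm_step1_sub_le P hlam hs)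
  linarith

theorem norm_step1_sub_step1_le_stretch (hφ : IsHolderWith T lam C φ) (hlam : 0 ≤ lam)
    {s r : ℝ} (hs : s ∈ Ico 0 T) (hr : r ∈ Ico 0 T) (hsr : s < r) :
    ‖step1 P φ r - step1 P φ s‖ ≤ C * (2 * P.stretch s * (r - s)) ^ lam := by
  have hC := hφ.const_nonneg_s6 P.length_pos
  obtain ⟨i, hi, hsi⟩ := P.exists_mem_cell hs
  obtain ⟨j, hj, hrj⟩ := P.exists_mem_cell hr
  have hij : i ≤ j := P.index_le_of_le hi hj hsi hrj hsr.le
  rw [step1_of_mem_cell P φ hi hsi, step1_of_mem_cell P φ hj hrj]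
  rcases hij.eq_or_lt with rfl | hij
  · have := P.one_le_stretch hs
    have := sub_pos.mpr hsr
    rw [sub_self, norm_zero]
    positivity
  refine hφ.norm_sub_le hC hlam (P.pts_mem_Icc_s6 hj.le) (P.pts_mem_Icc_s6 hi.le) ?_
  have hnode : P.pts (i + 1) ≤ P.pts j :=
    P.strictMonoOn_pts.monotoneOn (Nat.succ_le_of_lt hi) hj.le hij
  have hcell : P.pts (i + 1) - P.pts i ≤ P.stretch s * (r - s) := by
    have hd : 0 < P.pts (i + 1) - s := sub_pos.mpr hsi.2
    rw [P.stretch_of_mem_cell hi hsi, div_mul_eq_mul_div, le_div_iff₀ hd]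
    have : 0 ≤ P.pts (i + 1) - P.pts i := (sub_pos.mpr (P.lt i hi)).le
    gcongr
    exact hnode.trans hrj.1
  have hrs : r - s ≤ P.stretch s * (r - s) :=
    le_mul_of_one_le_left (sub_pos.mpr hsr).le (P.one_le_stretch hs)
  rw [abs_of_nonneg (by linarith [P.lt i hi])]
  linarith [hrj.1, hsi.2]

theorem norm_step1_sub_sub_le_stretch (hφ : IsHolderWith T lam C φ) (hlam : 0 ≤ lam) {s r : ℝ}
    (hs : s ∈ Ico 0 T) (hr : r ∈ Ico 0 T) (hsr : s < r) :
    ‖(step1 P φ r - φ r) - (step1 P φ s - φ s)‖ ≤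
      2 * C * (2 * P.stretch s * (r - s)) ^ lam := by
  have hstep := hφ.norm_step1_sub_step1_le_stretch P hlam hs hr hsr
  have hφrs : ‖φ r - φ s‖ ≤ C * (2 * P.stretch s * (r - s)) ^ lam := by
    refine hφ.norm_sub_le (hφ.const_nonneg_s6 P.length_pos) hlam (Ico_subset_Icc_self hr)
      (Ico_subset_Icc_self hs) ?_
    rw [abs_of_pos (sub_pos.mpr hsr)]
    exact le_mul_of_one_le_left (sub_pos.mpr hsr).le (by linarith [P.one_le_stretch hs])
  rw [sub_sub_sub_comm]
  linarith [norm_sub_le_of_le hstep hφrs]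

theorem norm_step1_sub_sub_le {β : ℝ} (hφ : IsHolderWith T lam C φ) (hβ : 0 ≤ β)
    (hβlam : β ≤ lam) {s r : ℝ} (hs : s ∈ Ico 0 T) (hr : r ∈ Ico 0 T) (hsr : s < r) :
    ‖(step1 P φ r - φ r) - (step1 P φ s - φ s)‖ ≤
      2 * C * (P.mesh ^ (lam - β) * (2 * P.stretch s * (r - s)) ^ β) := by
  have hC := hφ.const_nonneg_s6 P.length_pos
  have hstretch : 0 ≤ 2 * P.stretch s * (r - s) :=
    mul_nonneg (by linarith [P.one_le_stretch hs]) (sub_pos.mpr hsr).le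
  refine le_mul_rpow_mul_rpow_of_le (by positivity) P.mesh_pos_s6.le hstretch (sub_nonneg.mpr hβlam)
    hβ ?_ ?_
  · rw [sub_add_cancel]
    exact hφ.norm_step1_sub_sub_le_mesh P (hβ.trans hβlam) hs hr
  · rw [sub_add_cancel]
    exact hφ.norm_step1_sub_sub_le_stretch P (hβ.trans hβlam) hs hr hsr

end IsHolderWith

namespace CondA

variable {T α C : ℝ} {K K' : ℝ → ℝ → ℝ}

theorem const_nonneg_s6 (hA : CondA T α C K K') (hT : 0 < T) : 0 ≤ C := by
  have hhalf : 0 < T - T / 2 := by linarith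
  have h := (abs_nonneg _).trans (hA.2 (T / 2) T (half_pos hT) (half_lt_self hT) le_rfl).2
  exact nonneg_of_mul_nonneg_left h (Real.rpow_pos_of_pos hhalf _)

theorem norm_AK_le (hA : CondA T α C K K') {f : ℝ → E} {B β s : ℝ} (hαβ : α < β)
    (hs : s ∈ Ioo 0 T) (hf : ∀ r ∈ Ioo s T, ‖f r - f s‖ ≤ B * (r - s) ^ β) :
    ‖AK T K' f s‖ ≤ C * (B * ((T - s) ^ (β - α) / (β - α))) := by
  have hexp : -1 < β - α - 1 := by linarith
  calc ‖AK T K' f s‖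
      ≤ ∫ r in s..T, C * B * (r - s) ^ (β - α - 1) := by
        refine norm_intervalIntegral_le_of_norm_le_Ioo hs.2.le (fun r hr => ?_)
          ((intervalIntegrable_sub_right_rpow s T hexp).const_mul _)
        have hK' := (hA.2 s r hs.1 hr.1 hr.2.le).2
        calc ‖K' r s • (f r - f s)‖
            ≤ (C * (r - s) ^ (-(α + 1))) * (B * (r - s) ^ β) := by
              rw [norm_smul, Real.norm_eq_abs]
              exact mul_le_mul hK' (hf r hr) (norm_nonneg _) ((abs_nonneg _).trans hK')
          _ = C * B * ((r - s) ^ (-(α + 1)) * (r - s) ^ β) := by ring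
          _ = C * B * (r - s) ^ (β - α - 1) := by
              rw [← Real.rpow_add (sub_pos.mpr hr.1)]
              ring_nf
    _ = C * (B * ((T - s) ^ (β - α) / (β - α))) := by
        rw [intervalIntegral.integral_const_mul, integral_sub_right_rpow s T hexp, sub_add_cancel,
          mul_assoc]

theorem norm_Kstar_le (hA : CondA T α C K K') {f : ℝ → E} {A B β s : ℝ} (hαβ : α < β)
    (hs : s ∈ Ioo 0 T) (hfs : ‖f s‖ ≤ A) (hf : ∀ r ∈ Ioo s T, ‖f r - f s‖ ≤ B * (r - s) ^ β) :
    ‖Kstar T K K' f s‖ ≤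
      C * (A * (s ^ (-α) * (T - s) ^ (-α)) + B * ((T - s) ^ (β - α) / (β - α))) := by
  have hK := hA.1 s T hs.1 hs.2 le_rfl
  have hboundary : ‖K T s • f s‖ ≤ C * (A * (s ^ (-α) * (T - s) ^ (-α))) :=
    calc ‖K T s • f s‖ ≤ (C * s ^ (-α) * (T - s) ^ (-α)) * A := by
          rw [norm_smul, Real.norm_eq_abs]
          exact mul_le_mul hK hfs (norm_nonneg _) ((abs_nonneg _).trans hK)
      _ = C * (A * (s ^ (-α) * (T - s) ^ (-α))) := by ring
  rw [mul_add]
  exact norm_add_le_of_le hboundary (hA.norm_AK_le hαβ hs hf)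

end CondA

section Estimates

variable {T α β lam C D : ℝ} {K K' : ℝ → ℝ → ℝ} {φ : ℝ → E}

theorem norm_Kstar_step1_sub_le (hA : CondA T α C K K') (hφ : IsHolderWith T lam D φ)
    (hβ : 0 ≤ β) (hαβ : α < β) (hβlam : β ≤ lam) (P : Partition T) {s : ℝ} (hs : s ∈ Ioo 0 T) :
    ‖Kstar T K K' (fun r => step1 P φ r - φ r) s‖ ≤ C * D * P.mesh ^ (lam - β) *
      (T ^ β * (s ^ (-α) * (T - s) ^ (-α)) +
        2 * 2 ^ β * (T ^ (β - α) / (β - α)) * P.stretch s ^ β) := by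
  have hC := hA.const_nonneg_s6 P.length_pos
  have hD := hφ.const_nonneg_s6 P.length_pos
  have hm := P.mesh_pos_s6
  have hsT := sub_pos.mpr hs.2
  have hs' := Ioo_subset_Ico_self hs
  have hstretch : 0 ≤ P.stretch s := zero_le_one.trans (P.one_le_stretch hs')
  have hincrement : ∀ r ∈ Ioo s T, ‖(step1 P φ r - φ r) - (step1 P φ s - φ s)‖ ≤
      2 * D * P.mesh ^ (lam - β) * (2 ^ β * P.stretch s ^ β) * (r - s) ^ β := fun r hr => by
    have hsr := sub_pos.mpr hr.1
    calc ‖(step1 P φ r - φ r) - (step1 P φ s - φ s)‖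
        ≤ 2 * D * (P.mesh ^ (lam - β) * (2 * P.stretch s * (r - s)) ^ β) :=
          hφ.norm_step1_sub_sub_le P hβ hβlam hs' ⟨hs.1.le.trans hr.1.le, hr.2⟩ hr.1
      _ = 2 * D * P.mesh ^ (lam - β) * (2 ^ β * P.stretch s ^ β) * (r - s) ^ β := by
          rw [Real.mul_rpow (by positivity) hsr.le, Real.mul_rpow zero_le_two hstretch]
          ring
  calc ‖Kstar T K K' (fun r => step1 P φ r - φ r) s‖
      ≤ C * (D * (P.mesh ^ (lam - β) * T ^ β) * (s ^ (-α) * (T - s) ^ (-α)) +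
          2 * D * P.mesh ^ (lam - β) * (2 ^ β * P.stretch s ^ β) *
            ((T - s) ^ (β - α) / (β - α))) := hA.norm_Kstar_le hαβ hs
            (hφ.norm_step1_sub_le_mesh_rpow_mul P hβ hβlam hs') hincrement
    _ ≤ C * (D * (P.mesh ^ (lam - β) * T ^ β) * (s ^ (-α) * (T - s) ^ (-α)) +
          2 * D * P.mesh ^ (lam - β) * (2 ^ β * P.stretch s ^ β) *
            (T ^ (β - α) / (β - α))) := by
        gcongr
        exact sub_le_self T hs.1.le
    _ = _ := by ring

theorem sq_norm_Kstar_step1_sub_le (hA : CondA T α C K K') (hφ : IsHolderWith T lam D φ)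
    (hβ : 0 ≤ β) (hαβ : α < β) (hβlam : β ≤ lam) (P : Partition T) {s : ℝ} (hs : s ∈ Ioo 0 T) :
    ‖Kstar T K K' (fun r => step1 P φ r - φ r) s‖ ^ 2 ≤ 2 * (C * D * P.mesh ^ (lam - β)) ^ 2 *
      ((T ^ β) ^ 2 * (s ^ (-(2 * α)) * (T - s) ^ (-(2 * α))) +
        (2 * 2 ^ β * (T ^ (β - α) / (β - α))) ^ 2 * P.stretch s ^ (2 * β)) := by
  have rpow_two_mul {x : ℝ} (hx : 0 ≤ x) (p : ℝ) : x ^ (2 * p) = (x ^ p) ^ 2 := by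
    rw [mul_comm, ← Nat.cast_ofNat, Real.rpow_mul_natCast hx]
  have hstretch : 0 ≤ P.stretch s :=
    zero_le_one.trans (P.one_le_stretch (Ioo_subset_Ico_self hs))
  calc ‖Kstar T K K' (fun r => step1 P φ r - φ r) s‖ ^ 2
      ≤ (C * D * P.mesh ^ (lam - β) *
          (T ^ β * (s ^ (-α) * (T - s) ^ (-α)) +
            2 * 2 ^ β * (T ^ (β - α) / (β - α)) * P.stretch s ^ β)) ^ 2 := by
        gcongr
        exact norm_Kstar_step1_sub_le hA hφ hβ hαβ hβlam P hs
    _ ≤ (C * D * P.mesh ^ (lam - β)) ^ 2 *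
          (2 * ((T ^ β * (s ^ (-α) * (T - s) ^ (-α))) ^ 2 +
            (2 * 2 ^ β * (T ^ (β - α) / (β - α)) * P.stretch s ^ β) ^ 2)) := by
        rw [mul_pow]
        gcongr
        exact add_sq_le
    _ = _ := by
        rw [← mul_neg, rpow_two_mul hs.1.le, rpow_two_mul (sub_pos.mpr hs.2).le,
          rpow_two_mul hstretch]
        ring

theorem integral_sq_norm_Kstar_step1_sub_le (hA : CondA T α C K K') (hφ : IsHolderWith T lam D φ)
    (hβ : 0 ≤ β) (hαβ : α < β) (hβ2 : β < 1 / 2) (hβlam : β ≤ lam) (P : Partition T) :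
    ∫ s in 0..T, ‖Kstar T K K' (fun r => step1 P φ r - φ r) s‖ ^ 2 ≤
      2 * (C * D * P.mesh ^ (lam - β)) ^ 2 *
        ((T ^ β) ^ 2 * (∫ s in 0..T, s ^ (-(2 * α)) * (T - s) ^ (-(2 * α))) +
          (2 * 2 ^ β * (T ^ (β - α) / (β - α))) ^ 2 * (T / (1 - 2 * β))) := by
  have hT := P.length_pos
  have hα : -1 < -(2 * α) := by linarith
  have hβ1 : 2 * β < 1 := by linarith
  have hboundary := (intervalIntegrable_rpow_mul_sub_rpow hT hα hα).const_mul ((T ^ β) ^ 2)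
  have hsingular := (P.intervalIntegrable_stretch_rpow hβ1).const_mul
    ((2 * 2 ^ β * (T ^ (β - α) / (β - α))) ^ 2)
  rw [← P.integral_stretch_rpow hβ1, ← intervalIntegral.integral_const_mul,
    ← intervalIntegral.integral_const_mul, ← intervalIntegral.integral_add hboundary hsingular,
    ← intervalIntegral.integral_const_mul]
  refine (Real.le_norm_self _).trans (norm_intervalIntegral_le_of_norm_le_Ioo hT.le
    (fun s hs => ?_) ((hboundary.add hsingular).const_mul _))
  rw [norm_pow, norm_norm]
  exact sq_norm_Kstar_step1_sub_le hA hφ hβ hαβ hβlam P hs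

end Estimates

theorem kstar_step1_tendsto_L2_general {E : Type*} [NormedAddCommGroup E] [NormedSpace ℝ E]
    [CompleteSpace E] {T α lam : ℝ} (hα : α < 1 / 2) {K K' : ℝ → ℝ → ℝ}
    (hK : IsVolterraKernel K) (hA : ∃ C : ℝ, CondA T α C K K') {φ : ℝ → E} (hlam : 0 < lam)
    (hφ : IsHolder T lam φ) (hαlam : α < lam) :
    ∀ ε > 0, ∃ δ > 0, ∀ P : Partition T, P.mesh < δ →
      (∫ s in (0:ℝ)..T, ‖Kstar T K K' (fun r => step1 P φ r - φ r) s‖ ^ 2) < ε := by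
  intro ε hε
  obtain ⟨C, hA⟩ := hA
  obtain ⟨D, hφ⟩ := hφ
  obtain ⟨β, hβ, hβ'⟩ :=
    exists_between (max_lt (lt_min hlam one_half_pos) (lt_min hαlam hα))
  obtain ⟨hβ0, hαβ⟩ := max_lt_iff.mp hβ
  obtain ⟨hβlam, hβ2⟩ := lt_min_iff.mp hβ'
  have hbound := integral_sq_norm_Kstar_step1_sub_le hA hφ hβ0.le hαβ hβ2 hβlam.le
  set M := (T ^ β) ^ 2 * (∫ s in 0..T, s ^ (-(2 * α)) * (T - s) ^ (-(2 * α))) +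
    (2 * 2 ^ β * (T ^ (β - α) / (β - α))) ^ 2 * (T / (1 - 2 * β))
  have hcont : ContinuousAt (fun m : ℝ => 2 * (C * D * m ^ (lam - β)) ^ 2 * M) 0 := by
    have := Real.continuousAt_rpow_const 0 (lam - β) (Or.inr (sub_pos.mpr hβlam).le)
    fun_prop
  have hlim := hcont.eventually_lt continuousAt_const
    (by simpa [Real.zero_rpow (sub_pos.mpr hβlam).ne'] using hε)
  obtain ⟨δ, hδ, hsmall⟩ := Metric.eventually_nhds_iff.mp hlim
  refine ⟨δ, hδ, fun P hP => (hbound P).trans_lt (hsmall ?_)⟩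
  rwa [Real.dist_0_eq_abs, abs_of_pos P.mesh_pos_s6]

/-- Proposition 2.4: for `λ`-Hölder `φ` with `λ > α`,
`∫_0^T ‖𝒦*(φ^π − φ)(s)‖² ds → 0` as the mesh of the partition tends to `0`. -/
theorem kstar_step1_tendsto_L2 {E : Type*} [NormedAddCommGroup E] [NormedSpace ℝ E]
    [CompleteSpace E] (T α lam : ℝ) (hT : 0 < T) (hα : 0 ≤ α) (hα' : α < 1 / 4)
    (K K' : ℝ → ℝ → ℝ) (hK : IsVolterraKernel K) (hA : ∃ C : ℝ, CondA T α C K K')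
    (φ : ℝ → E) (hlam : 0 < lam) (hlam' : lam ≤ 1)
    (hφ : IsHolder T lam φ) (hαlam : α < lam) :
    ∀ ε > 0, ∃ δ > 0, ∀ P : Partition T, P.mesh < δ →
      (∫ s in (0:ℝ)..T, ‖Kstar T K K' (fun r => step1 P φ r - φ r) s‖ ^ 2) < ε := by
  exact kstar_step1_tendsto_L2_general (by linarith) hK hA hlam hφ hαlam

end YS
end
end

section
/- Let E be a Banach space, T > 0, and 0 < λ ≤ 1. If φ: [0,T]² → E is λ-Hölder bi-continuous, then φ is strongly (λ/2)-Hölder bi-continuous. -/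
open MeasureTheory Set

noncomputable section

namespace YS

variable {E : Type*} [NormedAddCommGroup E] [NormedSpace ℝ E]

/-!
The rectangular increment is a difference of two increments of `ψ` in `u`, and also of two
increments in `v`, so its norm is at most `2C` times the minimum of `|u₂ - u₁| ^ λ` and
`|v₂ - v₁| ^ λ`. A minimum is bounded by every weighted geometric mean; equal weights split the
exponent `λ` evenly between the two variables.
-/

lemma min_le_rpow_mul_rpow {a b θ : ℝ} (ha : 0 ≤ a) (hb : 0 ≤ b) (hθ₀ : 0 ≤ θ) (hθ₁ : θ ≤ 1) :
    min a b ≤ a ^ θ * b ^ (1 - θ) := by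
  have hmin : 0 ≤ min a b := le_min ha hb
  have hθ₁' : 0 ≤ 1 - θ := sub_nonneg.2 hθ₁
  calc min a b = min a b ^ θ * min a b ^ (1 - θ) := by
        rw [← Real.rpow_add_of_nonneg hmin hθ₀ hθ₁', add_sub_cancel, Real.rpow_one]
    _ ≤ a ^ θ * b ^ (1 - θ) := by
        gcongr
        exacts [min_le_left a b, min_le_right a b]

lemma rpow_le_rpow_sub_mul_rpow {x T lam mu : ℝ} (hx : 0 ≤ x) (hxT : x ≤ T) (hmu : 0 ≤ mu)
    (hle : mu ≤ lam) : x ^ lam ≤ T ^ (lam - mu) * x ^ mu := by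
  have hsub : 0 ≤ lam - mu := sub_nonneg.2 hle
  calc x ^ lam = x ^ (lam - mu) * x ^ mu := by
        rw [← Real.rpow_add_of_nonneg hx hsub hmu, sub_add_cancel]
    _ ≤ T ^ (lam - mu) * x ^ mu := by gcongr

section

variable {F : Type*} [NormedAddCommGroup F]

lemma rectInc_eq_sub_sub (ψ : ℝ → ℝ → F) (u₁ u₂ v₁ v₂ : ℝ) :
    rectInc ψ u₁ u₂ v₁ v₂ = (ψ u₂ v₂ - ψ u₁ v₂) - (ψ u₂ v₁ - ψ u₁ v₁) := by
  unfold rectInc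
  abel

lemma rectInc_flip (ψ : ℝ → ℝ → F) (u₁ u₂ v₁ v₂ : ℝ) :
    rectInc (flip ψ) v₁ v₂ u₁ u₂ = rectInc ψ u₁ u₂ v₁ v₂ := by
  simp only [rectInc, flip]
  abel

variable {T lam C : ℝ} {ψ : ℝ → ℝ → F}

namespace IsHolderBiWith

lemma flip (h : IsHolderBiWith T lam C ψ) : IsHolderBiWith T lam C (flip ψ) :=
  ⟨fun v₁ hv₁ v₂ hv₂ u hu => h.2 u hu v₁ hv₁ v₂ hv₂,
    fun v hv u₁ hu₁ u₂ hu₂ => h.1 u₁ hu₁ u₂ hu₂ v hv⟩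

lemma mono {D : ℝ} (h : IsHolderBiWith T lam C ψ) (hCD : C ≤ D) : IsHolderBiWith T lam D ψ :=
  ⟨fun u₁ hu₁ u₂ hu₂ v hv => (h.1 u₁ hu₁ u₂ hu₂ v hv).trans (by gcongr),
    fun u hu v₁ hv₁ v₂ hv₂ => (h.2 u hu v₁ hv₁ v₂ hv₂).trans (by gcongr)⟩

lemma of_exponent_le {mu : ℝ} (h : IsHolderBiWith T lam C ψ) (hC : 0 ≤ C) (hmu : 0 ≤ mu)
    (hle : mu ≤ lam) : IsHolderBiWith T mu (C * T ^ (lam - mu)) ψ := by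
  have hpow : ∀ s ∈ Icc 0 T, ∀ t ∈ Icc 0 T,
      C * |t - s| ^ lam ≤ C * T ^ (lam - mu) * |t - s| ^ mu := by
    intro s hs t ht
    have hst : |t - s| ≤ T := abs_sub_le_of_nonneg_of_le ht.1 ht.2 hs.1 hs.2
    rw [mul_assoc]
    gcongr
    exact rpow_le_rpow_sub_mul_rpow (abs_nonneg _) hst hmu hle
  exact ⟨fun u₁ hu₁ u₂ hu₂ v hv => (h.1 u₁ hu₁ u₂ hu₂ v hv).trans (hpow u₁ hu₁ u₂ hu₂),
    fun u hu v₁ hv₁ v₂ hv₂ => (h.2 u hu v₁ hv₁ v₂ hv₂).trans (hpow v₁ hv₁ v₂ hv₂)⟩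

variable {u₁ u₂ v₁ v₂ : ℝ}

lemma norm_rectInc_le_left (h : IsHolderBiWith T lam C ψ) (hu₁ : u₁ ∈ Icc 0 T)
    (hu₂ : u₂ ∈ Icc 0 T) (hv₁ : v₁ ∈ Icc 0 T) (hv₂ : v₂ ∈ Icc 0 T) :
    ‖rectInc ψ u₁ u₂ v₁ v₂‖ ≤ 2 * C * |u₂ - u₁| ^ lam := by
  rw [rectInc_eq_sub_sub]
  calc ‖(ψ u₂ v₂ - ψ u₁ v₂) - (ψ u₂ v₁ - ψ u₁ v₁)‖
      ≤ C * |u₂ - u₁| ^ lam + C * |u₂ - u₁| ^ lam :=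
        norm_sub_le_of_le (h.1 u₁ hu₁ u₂ hu₂ v₂ hv₂) (h.1 u₁ hu₁ u₂ hu₂ v₁ hv₁)
    _ = 2 * C * |u₂ - u₁| ^ lam := by ring

lemma norm_rectInc_le_right (h : IsHolderBiWith T lam C ψ) (hu₁ : u₁ ∈ Icc 0 T)
    (hu₂ : u₂ ∈ Icc 0 T) (hv₁ : v₁ ∈ Icc 0 T) (hv₂ : v₂ ∈ Icc 0 T) :
    ‖rectInc ψ u₁ u₂ v₁ v₂‖ ≤ 2 * C * |v₂ - v₁| ^ lam := by
  rw [← rectInc_flip]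
  exact h.flip.norm_rectInc_le_left hv₁ hv₂ hu₁ hu₂

lemma norm_rectInc_le_rpow_mul_rpow {θ : ℝ} (h : IsHolderBiWith T lam C ψ) (hC : 0 ≤ C)
    (hθ₀ : 0 ≤ θ) (hθ₁ : θ ≤ 1) (hu₁ : u₁ ∈ Icc 0 T) (hu₂ : u₂ ∈ Icc 0 T)
    (hv₁ : v₁ ∈ Icc 0 T) (hv₂ : v₂ ∈ Icc 0 T) :
    ‖rectInc ψ u₁ u₂ v₁ v₂‖ ≤
      2 * C * |u₂ - u₁| ^ (lam * θ) * |v₂ - v₁| ^ (lam * (1 - θ)) := by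
  have hC₂ : 0 ≤ 2 * C := by positivity
  calc ‖rectInc ψ u₁ u₂ v₁ v₂‖
      ≤ min (2 * C * |u₂ - u₁| ^ lam) (2 * C * |v₂ - v₁| ^ lam) :=
        le_min (h.norm_rectInc_le_left hu₁ hu₂ hv₁ hv₂) (h.norm_rectInc_le_right hu₁ hu₂ hv₁ hv₂)
    _ = 2 * C * min (|u₂ - u₁| ^ lam) (|v₂ - v₁| ^ lam) := (mul_min_of_nonneg _ _ hC₂).symm
    _ ≤ 2 * C * ((|u₂ - u₁| ^ lam) ^ θ * (|v₂ - v₁| ^ lam) ^ (1 - θ)) := by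
        gcongr
        exact min_le_rpow_mul_rpow (by positivity) (by positivity) hθ₀ hθ₁
    _ = 2 * C * |u₂ - u₁| ^ (lam * θ) * |v₂ - v₁| ^ (lam * (1 - θ)) := by
        rw [← Real.rpow_mul (abs_nonneg _), ← Real.rpow_mul (abs_nonneg _)]
        ring

lemma isStrongHolderBiWith_half (h : IsHolderBiWith T lam C ψ) (hC : 0 ≤ C) (hlam : 0 ≤ lam) :
    IsStrongHolderBiWith T (lam / 2) (max (C * T ^ (lam / 2)) (2 * C)) ψ := by
  have hbi : IsHolderBiWith T (lam / 2) (C * T ^ (lam / 2)) ψ := by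
    simpa only [sub_half] using h.of_exponent_le hC (by positivity) (half_le_self hlam)
  refine ⟨hbi.mono (le_max_left _ _), fun u₁ hu₁ u₂ hu₂ v₁ hv₁ v₂ hv₂ => ?_⟩
  calc ‖rectInc ψ u₁ u₂ v₁ v₂‖
      ≤ 2 * C * |u₂ - u₁| ^ (lam * 2⁻¹) * |v₂ - v₁| ^ (lam * (1 - 2⁻¹)) :=
        h.norm_rectInc_le_rpow_mul_rpow hC (by norm_num) (by norm_num) hu₁ hu₂ hv₁ hv₂
    _ = 2 * C * |u₂ - u₁| ^ (lam / 2) * |v₂ - v₁| ^ (lam / 2) := by ring_nf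
    _ ≤ max (C * T ^ (lam / 2)) (2 * C) * |u₂ - u₁| ^ (lam / 2) * |v₂ - v₁| ^ (lam / 2) := by
        gcongr
        exact le_max_right _ _

end IsHolderBiWith

theorem isStrongHolderBi_of_isHolderBi_general (hlam : 0 ≤ lam) (hψ : IsHolderBi T lam ψ) :
    IsStrongHolderBi T (lam / 2) ψ := by
  obtain ⟨C, hC⟩ := hψ
  have hC' : IsHolderBiWith T lam |C| ψ := hC.mono (le_abs_self C)
  exact ⟨_, hC'.isStrongHolderBiWith_half (abs_nonneg C) hlam⟩

end

/-- Lemma 3.5: a `λ`-Hölder bi-continuous function is strongly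
`λ/2`-Hölder bi-continuous. -/
theorem isStrongHolderBi_of_isHolderBi {E : Type*} [NormedAddCommGroup E] [NormedSpace ℝ E]
    [CompleteSpace E] (T lam : ℝ) (hT : 0 < T) (hlam : 0 < lam) (hlam' : lam ≤ 1)
    (φ : ℝ → ℝ → E) (hφ : IsHolderBi T lam φ) :
    IsStrongHolderBi T (lam / 2) φ :=
  isStrongHolderBi_of_isHolderBi_general hlam.le hφ

end YS
end
end
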